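/- Assume 𝕋 is bounded from below (a ∈ ℝ) and ℓ is in the limit-point case at b. Let φ_α ∈ [0, π), and for each z ∈ ℂ let (θ_z, θ_z^[1]) and (φ_z, φ_z^[1]) be the solution pairs of (ℓ − z)u = 0 with θ_z(σ(a)) = cos φ_α, θ_z^[1](σ(a)) = −sin φ_α, φ_z(σ(a)) = sin φ_α, φ_z^[1](σ(a)) = cos φ_α. Then for each z ∈ ℂ \ ℝ there is a unique m(z) ∈ ℂ such that the Weyl solution ψ_z = θ_z + m(z)·φ_z lies in L² near b, and the function m : ℂ \ ℝ → ℂ so defined is a Herglotz–Nevanlinna function: it is analytic on ℂ \ ℝ, satisfies m(conj z) = conj(m(z)), and Im m(z) > 0 whenever Im z > 0. -/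

import Mathlib

open MeasureTheory Set Filter
open scoped ENNReal NNReal Classical

/-- Forward shift of a time scale. -/
noncomputable def tsSigma (T : Set ℝ) (t : ℝ) : ℝ :=
  if ({s | s ∈ T ∧ t < s}).Nonempty then sInf {s | s ∈ T ∧ t < s} else sSup T

/-- Backward shift of a time scale. -/
noncomputable def tsRho (T : Set ℝ) (t : ℝ) : ℝ :=
  if ({s | s ∈ T ∧ s < t}).Nonempty then sSup {s | s ∈ T ∧ s < t} else sInf T

/-- `𝕋_κ` : the time scale with the left endpoint removed if it is finite and right-scattered. -/
noncomputable def tsKappa (T : Set ℝ) : Set ℝ :=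
  if BddBelow T ∧ sInf T < tsSigma T (sInf T) then T \ {sInf T} else T

/-- Extension `p̄` of a function on `𝕋_κ` to all of `ℝ`. -/
noncomputable def extK (T : Set ℝ) (p : ℝ → ℂ) (t : ℝ) : ℂ :=
  if t ∈ tsKappa T then p t else p (tsSigma (tsKappa T) t)

/-- Coercion of a real-valued coefficient to a complex-valued one. -/
def cR (f : ℝ → ℝ) : ℝ → ℂ := fun t => (f t : ℂ)

/-- `(u, u^[1])` is an integrated pair with density `h` against the measure `μ = dσ_κ`. -/
def IsPair (T : Set ℝ) (μ : Measure ℝ) (p : ℝ → ℂ) (u u1 h : ℝ → ℂ) : Prop :=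
  ∀ c x : ℝ, c ≤ x →
    u x = u c + ∫ t in c..x, u1 t / extK T p t ∧
    u1 x = u1 c + ∫ t in Set.Ioc c x, h t ∂μ

/-- `(u, u^[1])` is a solution pair of `(ℓ - z) u = g`. -/
def IsSLSol (T : Set ℝ) (μ : Measure ℝ) (p r q : ℝ → ℂ) (z : ℂ) (g : ℝ → ℂ)
    (u u1 : ℝ → ℂ) : Prop :=
  IsPair T μ p u u1 (fun t => (q t - z * r t) * u t - r t * g t)

/-- Wronskian of two pairs. -/
def Wr (u u1 v v1 : ℝ → ℂ) (x : ℝ) : ℂ := u x * v1 x - u1 x * v x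

/-- The integrand `|u|² r` as an `ℝ≥0∞`-valued function. -/
noncomputable def sqWeight (r : ℝ → ℝ) (u : ℝ → ℂ) (t : ℝ) : ℝ≥0∞ :=
  ((‖u t‖₊ : ℝ≥0∞)) ^ 2 * ENNReal.ofReal (r t)

/-- `u` lies in `L²` near the left endpoint `a`. -/
def L2NearLeft (T : Set ℝ) (μ : Measure ℝ) (r : ℝ → ℝ) (u : ℝ → ℂ) : Prop :=
  ∀ c ∈ tsKappa T, ∫⁻ t in {t | (∃ s ∈ T, s < t) ∧ t ≤ c} ∩ tsKappa T, sqWeight r u t ∂μ < ∞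

/-- `u` lies in `L²` near the right endpoint `b`. -/
def L2NearRight (T : Set ℝ) (μ : Measure ℝ) (r : ℝ → ℝ) (u : ℝ → ℂ) : Prop :=
  ∀ c ∈ tsKappa T, ∫⁻ t in {t | c ≤ t ∧ ∃ s ∈ T, t < s} ∩ tsKappa T, sqWeight r u t ∂μ < ∞

/-- `ℓ` is in the limit-circle case at the left endpoint. -/
def LimitCircleLeft (T : Set ℝ) (μ : Measure ℝ) (p r q : ℝ → ℝ) : Prop :=
  ∀ z : ℂ, ∀ u u1 : ℝ → ℂ, IsSLSol T μ (cR p) (cR r) (cR q) z 0 u u1 → L2NearLeft T μ r u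

/-- `ℓ` is in the limit-point case at the left endpoint. -/
def LimitPointLeft (T : Set ℝ) (μ : Measure ℝ) (p r q : ℝ → ℝ) : Prop :=
  ∀ z : ℂ, ∃ u u1 : ℝ → ℂ, IsSLSol T μ (cR p) (cR r) (cR q) z 0 u u1 ∧ ¬ L2NearLeft T μ r u

/-- `ℓ` is in the limit-circle case at the right endpoint. -/
def LimitCircleRight (T : Set ℝ) (μ : Measure ℝ) (p r q : ℝ → ℝ) : Prop :=
  ∀ z : ℂ, ∀ u u1 : ℝ → ℂ, IsSLSol T μ (cR p) (cR r) (cR q) z 0 u u1 → L2NearRight T μ r u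

/-- `ℓ` is in the limit-point case at the right endpoint. -/
def LimitPointRight (T : Set ℝ) (μ : Measure ℝ) (p r q : ℝ → ℝ) : Prop :=
  ∀ z : ℂ, ∃ u u1 : ℝ → ℂ, IsSLSol T μ (cR p) (cR r) (cR q) z 0 u u1 ∧ ¬ L2NearRight T μ r u

/-- The action `ℓ u = (-h + q u)/r` of the differential expression on a pair with density `h`. -/
noncomputable def ellApply (r q : ℝ → ℝ) (h u : ℝ → ℂ) (t : ℝ) : ℂ :=
  (-h t + (q t : ℂ) * u t) / (r t : ℂ)

/-- Membership in `L²(𝕋_κ; r dσ_κ)`. -/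
def MemL2T (T : Set ℝ) (μ : Measure ℝ) (r : ℝ → ℝ) (u : ℝ → ℂ) : Prop :=
  ∫⁻ t in tsKappa T, sqWeight r u t ∂μ < ∞

/-- The pair `(u, u^[1])` with density `h` belongs to `D_ℓ²`. -/
def MemD2 (T : Set ℝ) (μ : Measure ℝ) (p r q : ℝ → ℝ) (u u1 h : ℝ → ℂ) : Prop :=
  LocallyIntegrable h μ ∧ IsPair T μ (cR p) u u1 h ∧ MemL2T T μ r u ∧
    MemL2T T μ r (ellApply r q h u)

/-- The filter `x ↓ a`, `x ∈ 𝕋`. -/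
noncomputable def leftLimFilter (T : Set ℝ) : Filter ℝ :=
  if BddBelow T then nhdsWithin (sInf T) T else Filter.atBot ⊓ Filter.principal T

/-- The filter `x ↑ b`, `x ∈ 𝕋`. -/
noncomputable def rightLimFilter (T : Set ℝ) : Filter ℝ :=
  if BddAbove T then nhdsWithin (sSup T) T else Filter.atTop ⊓ Filter.principal T

/-- The measure `r dσ_κ` on `𝕋_κ`, giving the Hilbert space `L²(𝕋_κ; r dσ_κ)`. -/
noncomputable def wM (T : Set ℝ) (μ : Measure ℝ) (r : ℝ → ℝ) : Measure ℝ :=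
  (μ.restrict (tsKappa T)).withDensity fun t => ENNReal.ofReal (r t)



theorem sig_props {S : Set ℝ} (hcl : IsClosed S) (hub : ¬ BddAbove S) (t : ℝ) :
    tsSigma S t ∈ S ∧ t ≤ tsSigma S t ∧ ∀ s ∈ S, t < s → tsSigma S t ≤ s := by
  have hn : ({s | s ∈ S ∧ t < s}).Nonempty := by
    rw [not_bddAbove_iff] at hub
    obtain ⟨y, hy, hty⟩ := hub t
    exact ⟨y, hy, hty⟩
  have hb : BddBelow {s | s ∈ S ∧ t < s} := ⟨t, fun s hs => hs.2.le⟩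
  have he : tsSigma S t = sInf {s | s ∈ S ∧ t < s} := by simp only [tsSigma, if_pos hn]
  rw [he]
  refine ⟨?_, le_csInf hn fun s hs => hs.2.le, fun s hs hts => csInf_le hb ⟨hs, hts⟩⟩
  have h1 := csInf_mem_closure hn hb
  exact hcl.closure_subset_iff.2 (fun s hs => hs.1) h1

noncomputable def gk (S : Set ℝ) (t : ℝ) : ℝ := if t ∈ S then t else tsSigma S t

theorem gk_props {S : Set ℝ} (hcl : IsClosed S) (hub : ¬ BddAbove S) (t : ℝ) :
    gk S t ∈ S ∧ t ≤ gk S t ∧ ∀ s ∈ S, t ≤ s → gk S t ≤ s := by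
  obtain ⟨h1, h2, h3⟩ := sig_props hcl hub t
  by_cases h : t ∈ S
  · simp only [gk, if_pos h]; exact ⟨h, le_rfl, fun s _ h => h⟩
  · simp only [gk, if_neg h]
    refine ⟨h1, h2, fun s hs hts => h3 s hs (lt_of_le_of_ne hts ?_)⟩
    rintro rfl; exact h hs

theorem gk_mono {S : Set ℝ} (hcl : IsClosed S) (hub : ¬ BddAbove S) : Monotone (gk S) := by
  intro s t hst
  exact (gk_props hcl hub s).2.2 _ (gk_props hcl hub t).1 (hst.trans (gk_props hcl hub t).2.1)

theorem kappa_eq {T : Set ℝ} (hne : T.Nonempty) (hcl : IsClosed T) (hbb : BddBelow T)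
    (hub : ¬ BddAbove T) : tsKappa T = T ∩ Ici (tsSigma T (sInf T)) := by
  obtain ⟨h1, h2, h3⟩ := sig_props hcl hub (sInf T)
  unfold tsKappa
  split_ifs with h
  · ext s
    simp only [mem_diff, mem_singleton_iff, mem_inter_iff, mem_Ici]
    refine and_congr_right fun hs => ⟨fun hsa => h3 s hs
      (lt_of_le_of_ne (csInf_le hbb hs) (Ne.symm hsa)), fun hle he => ?_⟩
    linarith [h.2]
  · have : tsSigma T (sInf T) = sInf T := le_antisymm (not_lt.1 fun hh => h ⟨hbb, hh⟩) h2
    rw [this]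
    ext s; exact ⟨fun hs => ⟨hs, csInf_le hbb hs⟩, fun hs => hs.1⟩

theorem kappa_closed {T : Set ℝ} (hne : T.Nonempty) (hcl : IsClosed T) (hbb : BddBelow T)
    (hub : ¬ BddAbove T) : IsClosed (tsKappa T) ∧ ¬ BddAbove (tsKappa T) ∧ tsKappa T ⊆ T ∧
      tsKappa T ⊆ Ici (tsSigma T (sInf T)) := by
  rw [kappa_eq hne hcl hbb hub]
  refine ⟨hcl.inter isClosed_Ici, ?_, inter_subset_left, inter_subset_right⟩
  rw [not_bddAbove_iff] at hub ⊢
  intro x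
  obtain ⟨y, hy, hxy⟩ := hub (max x (tsSigma T (sInf T)))
  exact ⟨y, ⟨hy, (le_max_right _ _).trans hxy.le⟩, (le_max_left _ _).trans_lt hxy⟩

theorem map_gk {T : Set ℝ} (hne : T.Nonempty) (hcl : IsClosed T) (hbb : BddBelow T)
    (hub : ¬ BddAbove T) (ν : Measure ℝ)
    (hν : ∀ c d : ℝ, c ≤ d → ν (Set.Ico c d) = ENNReal.ofReal (tsRho T d - tsRho T c)) :
    (volume.restrict (Ioi (sInf T))).map (gk (tsKappa T)) = ν := by
  obtain ⟨k1, k2, k3, k4⟩ := kappa_closed hne hcl hbb hub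
  have hg := gk_props k1 k2
  have hmono := gk_mono k1 k2
  have hmeas : Measurable (gk (tsKappa T)) := hmono.measurable
  -- minimality among points of T above t > a
  have hmin : ∀ t, sInf T < t → ∀ s ∈ T, t ≤ s → gk (tsKappa T) t ≤ s := by
    intro t ht s hs hts
    refine (hg t).2.2 s ?_ hts
    rw [kappa_eq hne hcl hbb hub]
    exact ⟨hs, (sig_props hcl hub (sInf T)).2.2 s hs (ht.trans_le hts)⟩
  have rho_ge : ∀ c, sInf T ≤ tsRho T c := by
    intro c
    unfold tsRho
    split_ifs with h
    · obtain ⟨s, hs⟩ := h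
      exact (csInf_le hbb hs.1).trans (le_csSup ⟨c, fun y hy => hy.2.le⟩ hs)
    · exact le_rfl
  have rho_le : ∀ c s, s ∈ T → s < c → s ≤ tsRho T c := by
    intro c s hs hsc
    have h : ({s | s ∈ T ∧ s < c}).Nonempty := ⟨s, hs, hsc⟩
    unfold tsRho
    rw [if_pos h]
    exact le_csSup ⟨c, fun y hy => hy.2.le⟩ ⟨hs, hsc⟩
  have lt_rho : ∀ c t, sInf T ≤ t → t < tsRho T c → ∃ s ∈ T, t < s ∧ s < c := by
    intro c t ht htc
    unfold tsRho at htc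
    split_ifs at htc with h
    · obtain ⟨s, hs, hts⟩ := exists_lt_of_lt_csSup h htc
      exact ⟨s, hs.1, hts, hs.2⟩
    · linarith
  have key : ∀ c d : ℝ, c < d →
      (volume.restrict (Ioi (sInf T))).map (gk (tsKappa T)) (Ico c d) = ν (Ico c d) := by
    intro c d hcd
    rw [hν c d hcd.le, Measure.map_apply hmeas measurableSet_Ico,
      Measure.restrict_apply (hmeas measurableSet_Ico)]
    apply le_antisymm
    · rw [← Real.volume_Icc]
      apply measure_mono
      rintro t ⟨⟨h1, h2⟩, h3⟩
      have h3 : sInf T < t := h3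
      constructor
      · by_contra hlt
        obtain ⟨s, hs, hts, hsc⟩ := lt_rho c t h3.le (not_le.1 hlt)
        linarith [hmin t h3 s hs hts.le]
      · exact (hg t).2.1.trans (rho_le d _ (k3 (hg t).1) h2)
    · rw [← Real.volume_Ioo]
      apply measure_mono
      rintro t ⟨h1, h2⟩
      have h3 : sInf T < t := (rho_ge c).trans_lt h1
      refine ⟨⟨?_, ?_⟩, h3⟩
      · by_contra hlt
        have := rho_le c _ (k3 (hg t).1) (not_le.1 hlt)
        linarith [(hg t).2.1]
      · obtain ⟨s, hs, hts, hsc⟩ := lt_rho d t h3.le h2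
        exact (hmin t h3 s hs hts.le).trans_lt hsc
  refine Measure.ext_of_Ico' _ _ (fun {c d} hcd => ?_) (fun {c d} hcd => key c d hcd)
  rw [key c d hcd, hν c d hcd.le]
  exact ENNReal.ofReal_ne_top

theorem pbar_props {T : Set ℝ} (hne : T.Nonempty) (hcl : IsClosed T) (hbb : BddBelow T)
    (hub : ¬ BddAbove T) (ν : Measure ℝ)
    (hν : ∀ c d : ℝ, c ≤ d → ν (Set.Ico c d) = ENNReal.ofReal (tsRho T d - tsRho T c))
    (p : ℝ → ℝ) (hpne : ∀ᵐ t ∂ν, p t ≠ 0) (hp : LocallyIntegrable (fun t => 1 / p t) ν) :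
    (∀ᵐ t ∂(volume.restrict (Ioi (sInf T))), p (gk (tsKappa T) t) ≠ 0) ∧
    ∀ d, IntegrableOn (fun t => 1 / p (gk (tsKappa T) t)) (Ioc (sInf T) d) volume := by
  obtain ⟨k1, k2, k3, k4⟩ := kappa_closed hne hcl hbb hub
  have hg := gk_props k1 k2
  have hmono := gk_mono k1 k2
  have hmeas : Measurable (gk (tsKappa T)) := hmono.measurable
  have hmap := map_gk hne hcl hbb hub ν hν
  constructor
  · rw [← hmap] at hpne
    exact ae_of_ae_map hmeas.aemeasurable hpne
  · intro d
    have h1 : IntegrableOn (fun t => 1 / p t) (Icc (sInf T) (gk (tsKappa T) d)) ν :=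
      hp.integrableOn_isCompact isCompact_Icc
    unfold IntegrableOn at h1
    rw [← hmap, Measure.restrict_map hmeas measurableSet_Icc] at h1
    have h2 := h1.comp_measurable hmeas
    rw [Measure.restrict_restrict (hmeas measurableSet_Icc)] at h2
    refine IntegrableOn.mono_set (s := Ioc (sInf T) d) h2 ?_
    intro t ht
    refine ⟨⟨ht.1.le.trans (hg t).2.1, hmono ht.2⟩, ht.1⟩


theorem cont_of_pair {f u : ℝ → ℂ} (h : ∀ c x : ℝ, c ≤ x → u x = u c + ∫ t in c..x, f t) :
    Continuous u := by
  rw [continuous_iff_continuousAt]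
  intro x
  rw [continuousAt_iff_continuous_left_right]
  constructor
  · by_cases hc : ∃ c < x, IntervalIntegrable f volume c x
    · obtain ⟨c, hcx, hi⟩ := hc
      have h1 : ContinuousOn (fun b => ∫ t in c..b, f t) (uIcc c x) :=
        intervalIntegral.continuousOn_primitive_interval' hi left_mem_uIcc
      rw [uIcc_of_le hcx.le] at h1
      have h2 : ContinuousOn u (Icc c x) := by
        refine (h1.const_add (u c)).congr fun y hy => h c y hy.1
      refine (h2 x (right_mem_Icc.2 hcx.le)).mono_of_mem_nhdsWithin (Icc_mem_nhdsLE hcx)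
    · push Not at hc
      have : ∀ y ∈ Iic x, u y = u x := by
        intro y hy
        rcases eq_or_lt_of_le (mem_Iic.1 hy) with he | hlt
        · rw [he]
        · rw [h y x hy, intervalIntegral.integral_undef (hc y hlt), add_zero]
      exact (continuousWithinAt_const (b := u x)).congr this rfl
  · by_cases hc : ∃ c > x, IntervalIntegrable f volume x c
    · obtain ⟨c, hcx, hi⟩ := hc
      have hcx : x < c := hcx
      have h1 : ContinuousOn (fun b => ∫ t in x..b, f t) (uIcc x c) :=
        intervalIntegral.continuousOn_primitive_interval' hi left_mem_uIcc
      rw [uIcc_of_le hcx.le] at h1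
      have h2 : ContinuousOn u (Icc x c) := by
        refine (h1.const_add (u x)).congr fun y hy => h x y hy.1
      refine (h2 x (left_mem_Icc.2 hcx.le)).mono_of_mem_nhdsWithin (Icc_mem_nhdsGE hcx)
    · push Not at hc
      have : ∀ y ∈ Ici x, u y = u x := by
        intro y hy
        rcases eq_or_lt_of_le (mem_Ici.1 hy) with he | hlt
        · rw [he]
        · rw [h x y hy, intervalIntegral.integral_undef (hc y hlt), add_zero]
      exact (continuousWithinAt_const (b := u x)).congr this rfl

theorem ibp0 (m1 m2 : Measure ℝ) [IsFiniteMeasure m1] [IsFiniteMeasure m2] [NullSingletonClass m1]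
    (f h : ℝ → ℂ) (hf : Integrable f m1) (hh : Integrable h m2) :
    Integrable (fun t => (∫ s in Iic t, f s ∂m1) * h t) m2 ∧
    Integrable (fun s => f s * (∫ t in Iic s, h t ∂m2)) m1 ∧
    ∫ t, (∫ s in Iic t, f s ∂m1) * h t ∂m2 + ∫ s, f s * (∫ t in Iic s, h t ∂m2) ∂m1
      = (∫ s, f s ∂m1) * ∫ t, h t ∂m2 := by
  have hF : Integrable (fun z : ℝ × ℝ => f z.1 * h z.2) (m1.prod m2) := hf.mul_prod hh
  set A : Set (ℝ × ℝ) := {z | z.1 < z.2} with hA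
  have hAm : MeasurableSet A := measurableSet_lt measurable_fst measurable_snd
  set F := (fun z : ℝ × ℝ => f z.1 * h z.2) with hFd
  have h1 : Integrable (A.indicator F) (m1.prod m2) := hF.indicator hAm
  have h2 : Integrable (Aᶜ.indicator F) (m1.prod m2) := hF.indicator hAm.compl
  have e1 : (fun t => (∫ s in Iic t, f s ∂m1) * h t) = fun t => ∫ s, A.indicator F (s, t) ∂m1 := by
    ext t
    rw [integral_Iic_eq_integral_Iio, ← integral_indicator measurableSet_Iio,
      ← integral_mul_const]
    congr 1; ext s
    by_cases hs : s < t
    · have : (s, t) ∈ A := hs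
      rw [indicator_of_mem this, indicator_of_mem (mem_Iio.2 hs)]
    · have : (s, t) ∉ A := hs
      rw [indicator_of_notMem this, indicator_of_notMem (by simpa using hs), zero_mul]
  have e2 : (fun s => f s * (∫ t in Iic s, h t ∂m2)) = fun s => ∫ t, Aᶜ.indicator F (s, t) ∂m2 := by
    ext s
    rw [← integral_indicator measurableSet_Iic, ← integral_const_mul]
    congr 1; ext t
    by_cases hs : s < t
    · have : (s, t) ∉ Aᶜ := fun hc => hc hs
      rw [indicator_of_notMem this, indicator_of_notMem (by simpa using hs), mul_zero]
    · have : (s, t) ∈ Aᶜ := hs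
      rw [indicator_of_mem this, indicator_of_mem (by simpa using hs)]
  rw [e1, e2]
  refine ⟨h1.integral_prod_right, h2.integral_prod_left, ?_⟩
  rw [← integral_prod_symm _ h1, ← integral_prod _ h2, ← integral_add h1 h2,
    ← integral_prod_mul]
  congr 1; ext z
  exact congrFun (indicator_self_add_compl A F) z

theorem ibp1 (μ : Measure ℝ) [IsLocallyFiniteMeasure μ] {x0 x : ℝ} (hx : x0 ≤ x)
    {U V f k : ℝ → ℂ}
    (hf : IntegrableOn f (Ioc x0 x) volume) (hk : IntegrableOn k (Ioc x0 x) μ)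
    (hU : ∀ t ∈ Icc x0 x, U t = U x0 + ∫ s in Ioc x0 t, f s)
    (hV : ∀ t ∈ Icc x0 x, V t = V x0 + ∫ s in Ioc x0 t, k s ∂μ) :
    IntegrableOn (fun t => U t * k t) (Ioc x0 x) μ ∧
    IntegrableOn (fun t => f t * V t) (Ioc x0 x) volume ∧
    U x * V x - U x0 * V x0 = ∫ t in Ioc x0 x, U t * k t ∂μ + ∫ t in Ioc x0 x, f t * V t := by
  have : IsFiniteMeasure (μ.restrict (Ioc x0 x)) :=
    ⟨by rw [Measure.restrict_apply_univ]; exact measure_Ioc_lt_top⟩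
  obtain ⟨i1, i2, e⟩ := ibp0 (volume.restrict (Ioc x0 x)) (μ.restrict (Ioc x0 x)) f k hf hk
  have hset : ∀ t ∈ Ioc x0 x, Iic t ∩ Ioc x0 x = Ioc x0 t := by
    intro t ht
    ext s
    simp only [mem_inter_iff, mem_Iic, mem_Ioc]
    exact ⟨fun h => ⟨h.2.1, h.1⟩, fun h => ⟨h.2, h.1, h.2.trans ht.2⟩⟩
  have eU : ∀ t ∈ Ioc x0 x, U x0 * k t + (∫ s in Iic t, f s ∂(volume.restrict (Ioc x0 x))) * k t
      = U t * k t := by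
    intro t ht
    rw [Measure.restrict_restrict measurableSet_Iic, hset t ht, hU t ⟨ht.1.le, ht.2⟩]; ring
  have eV : ∀ t ∈ Ioc x0 x, V x0 * f t + f t * (∫ s in Iic t, k s ∂(μ.restrict (Ioc x0 x)))
      = f t * V t := by
    intro t ht
    rw [Measure.restrict_restrict measurableSet_Iic, hset t ht, hV t ⟨ht.1.le, ht.2⟩]; ring
  have hk' := hk.const_mul (U x0)
  have hf' := hf.const_mul (V x0)
  refine ⟨?_, ?_, ?_⟩
  · exact IntegrableOn.congr_fun (hk'.add i1) (fun t ht => eU t ht) measurableSet_Ioc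
  · exact IntegrableOn.congr_fun (hf'.add i2) (fun t ht => eV t ht) measurableSet_Ioc
  · rw [← setIntegral_congr_fun measurableSet_Ioc eU, ← setIntegral_congr_fun measurableSet_Ioc eV,
      integral_add hk' i1, integral_add hf' i2, integral_const_mul, integral_const_mul,
      hU x ⟨hx, le_rfl⟩, hV x ⟨hx, le_rfl⟩]
    linear_combination (-1 : ℂ) * e

structure Sol (x0 : ℝ) (μ : Measure ℝ) (w r q : ℝ → ℝ) (z : ℂ) (u u1 : ℝ → ℂ) : Prop where
  cont : Continuous u
  i1 : ∀ x, IntegrableOn (fun t => u1 t * (w t : ℂ)) (Ioc x0 x) volume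
  i2 : ∀ x, IntegrableOn (fun t => ((q t : ℂ) - z * r t) * u t) (Ioc x0 x) μ
  e1 : ∀ x, x0 ≤ x → u x = u x0 + ∫ t in Ioc x0 x, u1 t * (w t : ℂ)
  e2 : ∀ x, x0 ≤ x → u1 x = u1 x0 + ∫ t in Ioc x0 x, ((q t : ℂ) - z * r t) * u t ∂μ

theorem intOn_cont {μ : Measure ℝ} {r : ℝ → ℝ} (hr : LocallyIntegrable r μ)
    {f : ℝ → ℂ} (hf : Continuous f) (c d : ℝ) : IntegrableOn (fun t => f t * (r t : ℂ)) (Ioc c d) μ := by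
  have h1 : IntegrableOn (fun t => (r t : ℂ)) (Icc c d) μ :=
    (hr.integrableOn_isCompact isCompact_Icc).ofReal
  exact (h1.continuousOn_mul hf.continuousOn isCompact_Icc).mono_set Ioc_subset_Icc_self

theorem intOn_h {μ : Measure ℝ} {r q : ℝ → ℝ} (hr : LocallyIntegrable r μ)
    (hq : LocallyIntegrable q μ) (z : ℂ)
    {f : ℝ → ℂ} (hf : Continuous f) (c d : ℝ) :
    IntegrableOn (fun t => ((q t : ℂ) - z * r t) * f t) (Ioc c d) μ := by
  have h1 := intOn_cont hr hf c d
  have h2 := intOn_cont hq hf c d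
  refine IntegrableOn.congr_fun (h2.sub (h1.const_mul z)) (fun t _ => ?_) measurableSet_Ioc
  simp; ring

theorem sol_mk {x0 : ℝ} {μ : Measure ℝ} [IsLocallyFiniteMeasure μ] {w r q : ℝ → ℝ} {z : ℂ}
    {u u1 : ℝ → ℂ}
    (hr : LocallyIntegrable r μ) (hq : LocallyIntegrable q μ)
    (hw : ∀ x, IntegrableOn w (Ioc x0 x) volume)
    (h : ∀ c x : ℝ, c ≤ x → u x = u c + ∫ t in c..x, u1 t * (w t : ℂ) ∧
      u1 x = u1 c + ∫ t in Ioc c x, ((q t : ℂ) - z * r t) * u t ∂μ) :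
    Sol x0 μ w r q z u u1 := by
  have hc : Continuous u := cont_of_pair (fun c x hcx => (h c x hcx).1)
  have hi := fun x => intOn_h hr hq z hc x0 x
  refine ⟨hc, ?_, hi, ?_, fun x hx => (h x0 x hx).2⟩
  · intro x
    set k := (fun t => ((q t : ℂ) - z * r t) * u t) with hk
    have : IsFiniteMeasure (μ.restrict (Ioc x0 x)) :=
      ⟨by rw [Measure.restrict_apply_univ]; exact measure_Ioc_lt_top⟩
    have hset : ∀ t ∈ Ioc x0 x, Iic t ∩ Ioc x0 x = Ioc x0 t := by
      intro t ht
      ext s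
      simp only [mem_inter_iff, mem_Iic, mem_Ioc]
      exact ⟨fun h => ⟨h.2.1, h.1⟩, fun h => ⟨h.2, h.1, h.2.trans ht.2⟩⟩
    have hm : AEStronglyMeasurable u1 (volume.restrict (Ioc x0 x)) := by
      have hAm : MeasurableSet {z : ℝ × ℝ | z.2 ≤ z.1} := measurableSet_le measurable_snd measurable_fst
      have h0 : AEStronglyMeasurable (fun z : ℝ × ℝ => k z.2)
          ((volume.restrict (Ioc x0 x)).prod (μ.restrict (Ioc x0 x))) := (hi x).1.comp_snd
      have h1 := (h0.indicator hAm).integral_prod_right'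
      have h2 := (aestronglyMeasurable_const (b := u1 x0)).add h1
      refine h2.congr ?_
      filter_upwards [ae_restrict_mem measurableSet_Ioc] with t ht
      rw [(h x0 t ht.1.le).2]
      simp only [Pi.add_apply]
      congr 1
      rw [← hset t ht, ← Measure.restrict_restrict measurableSet_Iic,
        ← integral_indicator measurableSet_Iic]
      congr 1
    have hb : ∀ᵐ t ∂(volume.restrict (Ioc x0 x)), ‖u1 t‖ ≤ ‖u1 x0‖ + ∫ s in Ioc x0 x, ‖k s‖ ∂μ := by
      filter_upwards [ae_restrict_mem measurableSet_Ioc] with t ht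
      rw [(h x0 t ht.1.le).2]
      refine (norm_add_le _ _).trans (add_le_add_right ?_ _)
      refine (norm_integral_le_integral_norm _).trans ?_
      exact setIntegral_mono_set (hi x).norm (Eventually.of_forall fun s => norm_nonneg _)
        (Ioc_subset_Ioc_right ht.2).eventuallyLE
    exact Integrable.bdd_mul (hw x).ofReal hm hb
  · intro x hx
    rw [(h x0 x hx).1, intervalIntegral.integral_of_le hx]

namespace Sol
variable {x0 : ℝ} {μ : Measure ℝ} {w r q : ℝ → ℝ} {z z' : ℂ} {u u1 v v1 : ℝ → ℂ}

theorem comb (hu : Sol x0 μ w r q z u u1) (hv : Sol x0 μ w r q z v v1) (m : ℂ) :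
    Sol x0 μ w r q z (fun x => u x + m * v x) (fun x => u1 x + m * v1 x) := by
  have e1 : ∀ x, ∀ t ∈ Ioc x0 x, u1 t * (w t : ℂ) + m * (v1 t * (w t : ℂ)) = (u1 t + m * v1 t) * w t :=
    fun x t _ => by ring
  have e2 : ∀ x, ∀ t ∈ Ioc x0 x, ((q t : ℂ) - z * r t) * u t + m * (((q t : ℂ) - z * r t) * v t) =
     ((q t : ℂ) - z * r t) * (u t + m * v t) :=
    fun x t _ => by ring
  refine ⟨hu.cont.add (continuous_const.mul hv.cont), fun x => ?_, fun x => ?_, fun x hx => ?_,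
    fun x hx => ?_⟩
  · exact IntegrableOn.congr_fun ((hu.i1 x).add ((hv.i1 x).const_mul m)) (e1 x) measurableSet_Ioc
  · exact IntegrableOn.congr_fun ((hu.i2 x).add ((hv.i2 x).const_mul m)) (e2 x) measurableSet_Ioc
  · rw [← setIntegral_congr_fun measurableSet_Ioc (e1 x), integral_add (hu.i1 x)
      ((hv.i1 x).const_mul m), integral_const_mul, hu.e1 x hx, hv.e1 x hx]
    ring
  · rw [← setIntegral_congr_fun measurableSet_Ioc (e2 x), integral_add (hu.i2 x)
      ((hv.i2 x).const_mul m), integral_const_mul, hu.e2 x hx, hv.e2 x hx]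
    ring

theorem conj (hu : Sol x0 μ w r q z u u1) :
    Sol x0 μ w r q (starRingEnd ℂ z) (fun x => starRingEnd ℂ (u x)) (fun x => starRingEnd ℂ (u1 x)) := by
  have e1 : ∀ x, ∀ t ∈ Ioc x0 x, starRingEnd ℂ (u1 t * (w t : ℂ)) = starRingEnd ℂ (u1 t) * w t :=
    fun x t _ => by simp
  have e2 : ∀ x, ∀ t ∈ Ioc x0 x, starRingEnd ℂ (((q t : ℂ) - z * r t) * u t) =
     ((q t : ℂ) - starRingEnd ℂ z * r t) * starRingEnd ℂ (u t) :=
    fun x t _ => by simp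
  have ic : ∀ {m : Measure ℝ} {f : ℝ → ℂ}, Integrable f m → Integrable (fun t => starRingEnd ℂ (f t)) m :=
    fun {m f} hf => (Complex.conjLIE.integrable_comp_iff (φ := f)).2 hf
  refine ⟨Complex.continuous_conj.comp hu.cont, fun x => ?_, fun x => ?_, fun x hx => ?_,
    fun x hx => ?_⟩
  · exact IntegrableOn.congr_fun (ic (hu.i1 x)) (e1 x) measurableSet_Ioc
  · exact IntegrableOn.congr_fun (ic (hu.i2 x)) (e2 x) measurableSet_Ioc
  · rw [← setIntegral_congr_fun measurableSet_Ioc (e1 x), integral_conj, hu.e1 x hx, map_add]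
  · rw [← setIntegral_congr_fun measurableSet_Ioc (e2 x), integral_conj, hu.e2 x hx, map_add]

theorem lagrange [IsLocallyFiniteMeasure μ] (hr : LocallyIntegrable r μ)
    (hu : Sol x0 μ w r q z u u1) (hv : Sol x0 μ w r q z' v v1)
    {x : ℝ} (hx : x0 ≤ x) :
    Wr u u1 v v1 x - Wr u u1 v v1 x0 = (z - z') * ∫ t in Ioc x0 x, u t * v t * (r t : ℂ) ∂μ := by
  obtain ⟨a1, a2, a3⟩ := ibp1 μ hx (hu.i1 x) (hv.i2 x) (fun t ht => hu.e1 t ht.1)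
    (fun t ht => hv.e2 t ht.1)
  obtain ⟨b1, b2, b3⟩ := ibp1 μ hx (hv.i1 x) (hu.i2 x) (fun t ht => hv.e1 t ht.1)
    (fun t ht => hu.e2 t ht.1)
  have c1 : ∫ t in Ioc x0 x, u1 t * (w t : ℂ) * v1 t = ∫ t in Ioc x0 x, v1 t * (w t : ℂ) * u1 t := by
    congr 1; ext t; ring
  have c2 : ∫ t in Ioc x0 x, u t * (((q t : ℂ) - z' * r t) * v t) ∂μ
      - ∫ t in Ioc x0 x, v t * (((q t : ℂ) - z * r t) * u t) ∂μ
      = (z - z') * ∫ t in Ioc x0 x, u t * v t * (r t : ℂ) ∂μ := by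
    rw [← integral_sub a1 b1, ← integral_const_mul]
    congr 1; ext t; ring
  unfold Wr
  linear_combination a3 - b3 + c2 + c1

end Sol


noncomputable def Bf (x0 : ℝ) (μ : Measure ℝ) (r : ℝ → ℝ) (x : ℝ) (f g : ℝ → ℂ) : ℂ :=
  ∫ t in Ioc x0 x, f t * g t * (r t : ℂ) ∂μ

noncomputable def An (x0 : ℝ) (μ : Measure ℝ) (r : ℝ → ℝ) (x : ℝ) (f : ℝ → ℂ) : ℝ :=
  ∫ t in Ioc x0 x, ‖f t‖ ^ 2 * r t ∂μ

section forms
variable {x0 : ℝ} {μ : Measure ℝ} {r : ℝ → ℝ}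

theorem An_int (hr : LocallyIntegrable r μ) {f : ℝ → ℂ} (hf : Continuous f) (c d : ℝ) :
    IntegrableOn (fun t => ‖f t‖ ^ 2 * r t) (Ioc c d) μ := by
  have h1 : IntegrableOn r (Icc c d) μ := hr.integrableOn_isCompact isCompact_Icc
  exact (h1.continuousOn_mul (hf.norm.pow 2).continuousOn isCompact_Icc).mono_set Ioc_subset_Icc_self

theorem An_pos_ae (hrpos : ∀ᵐ t ∂μ, 0 < r t) (f : ℝ → ℂ) (s : Set ℝ) :
    0 ≤ᵐ[μ.restrict s] fun t => ‖f t‖ ^ 2 * r t := by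
  filter_upwards [ae_restrict_of_ae hrpos] with t ht
  have : (0:ℝ) ≤ ‖f t‖ ^ 2 * r t := by positivity
  exact this

theorem An_nonneg (hrpos : ∀ᵐ t ∂μ, 0 < r t) (f : ℝ → ℂ) (x : ℝ) : 0 ≤ An x0 μ r x f :=
  integral_nonneg_of_ae (An_pos_ae hrpos f _)

theorem An_mono (hr : LocallyIntegrable r μ) (hrpos : ∀ᵐ t ∂μ, 0 < r t) {f : ℝ → ℂ}
    (hf : Continuous f) {x y : ℝ} (hxy : x ≤ y) : An x0 μ r x f ≤ An x0 μ r y f :=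
  setIntegral_mono_set (An_int hr hf _ _) (An_pos_ae hrpos f _) (Ioc_subset_Ioc_right hxy).eventuallyLE

theorem An_Bf (f : ℝ → ℂ) (x : ℝ) :
    Bf x0 μ r x f (fun t => starRingEnd ℂ (f t)) = (An x0 μ r x f : ℂ) := by
  unfold Bf An
  rw [← integral_complex_ofReal]
  congr 1; ext t
  rw [Complex.mul_conj, Complex.normSq_eq_norm_sq]; push_cast; rfl

theorem An_expand (hr : LocallyIntegrable r μ) {f g : ℝ → ℂ} (hf : Continuous f) (hg : Continuous g)
    (s : ℂ) (x : ℝ) : An x0 μ r x (fun t => f t + starRingEnd ℂ (s * g t)) =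
      An x0 μ r x f + 2 * (s * Bf x0 μ r x f g).re + ‖s‖ ^ 2 * An x0 μ r x g := by
  have i1 := An_int hr hf x0 x
  have i2 := An_int hr hg x0 x
  have i3 := intOn_cont hr (hf.mul hg) x0 x
  have i4 : Integrable (fun t => (s * (f t * g t * (r t : ℂ))).re) (μ.restrict (Ioc x0 x)) :=
    (i3.const_mul s).re
  have : (s * Bf x0 μ r x f g).re = ∫ t in Ioc x0 x, (s * (f t * g t * (r t : ℂ))).re ∂μ := by
    unfold Bf
    rw [← integral_const_mul]
    exact (integral_re (i3.const_mul s)).symm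
  rw [this]
  unfold An
  rw [← integral_const_mul, ← integral_const_mul, ← integral_add i1 (i4.const_mul 2), ← integral_add]
  · congr 1; ext t
    simp only [← Complex.normSq_eq_norm_sq, Complex.normSq_apply, Complex.mul_re, Complex.mul_im,
      Complex.add_re, Complex.add_im, Complex.conj_re, Complex.conj_im, Complex.ofReal_re,
      Complex.ofReal_im]
    ring
  · exact i1.add (i4.const_mul 2)
  · exact i2.const_mul _

theorem cauchy_schwarz (hr : LocallyIntegrable r μ) (hrpos : ∀ᵐ t ∂μ, 0 < r t) {f g : ℝ → ℂ}
    (hf : Continuous f) (hg : Continuous g) (x : ℝ) :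
    ‖Bf x0 μ r x f g‖ ^ 2 ≤ An x0 μ r x f * An x0 μ r x g := by
  set B := Bf x0 μ r x f g with hB
  have h : ∀ τ : ℝ, 0 ≤ (‖B‖ ^ 2 * An x0 μ r x g) * (τ * τ) + (-2 * ‖B‖ ^ 2) * τ + An x0 μ r x f := by
    intro τ
    have h1 := An_expand (x0 := x0) hr hf hg (-(τ : ℂ) * starRingEnd ℂ B) x
    have h2 := An_nonneg (x0 := x0) hrpos (fun t => f t + starRingEnd ℂ (-(τ : ℂ) * starRingEnd ℂ B * g t)) x
    rw [h1, ← hB] at h2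
    have e1 : (-(τ : ℂ) * starRingEnd ℂ B * B).re = - τ * ‖B‖ ^ 2 := by
      rw [mul_assoc, mul_comm (starRingEnd ℂ B), Complex.mul_conj, Complex.normSq_eq_norm_sq]
      rw [← Complex.ofReal_neg, ← Complex.ofReal_mul, Complex.ofReal_re]
    have e2 : ‖-(τ : ℂ) * starRingEnd ℂ B‖ ^ 2 = τ * τ * ‖B‖ ^ 2 := by
      rw [norm_mul, norm_neg, Complex.norm_real, Complex.norm_conj, mul_pow, Real.norm_eq_abs, sq_abs]; ring
    rw [e1, e2] at h2
    linarith
  have hd := discrim_le_zero h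
  unfold discrim at hd
  rcases eq_or_ne (‖B‖ ^ 2) 0 with h0 | h0
  · rw [h0]; exact mul_nonneg (An_nonneg hrpos f x) (An_nonneg hrpos g x)
  · have hp : 0 < ‖B‖ ^ 2 := lt_of_le_of_ne (by positivity) (Ne.symm h0)
    by_contra hc
    push Not at hc
    nlinarith [mul_pos hp (sub_pos.2 hc)]

theorem An_add_le (hr : LocallyIntegrable r μ) (hrpos : ∀ᵐ t ∂μ, 0 < r t) {f g h : ℝ → ℂ}
    (hf : Continuous f) (hg : Continuous g) (hh : Continuous h) (e : ∀ t, ‖h t‖ ≤ ‖f t‖ + ‖g t‖) (x : ℝ) :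
    An x0 μ r x h ≤ 2 * An x0 μ r x f + 2 * An x0 μ r x g := by
  have i1 := An_int hr hf x0 x
  have i2 := An_int hr hg x0 x
  unfold An
  rw [← integral_const_mul, ← integral_const_mul, ← integral_add (i1.const_mul 2) (i2.const_mul 2)]
  refine integral_mono_ae (An_int hr hh x0 x) ((i1.const_mul 2).add (i2.const_mul 2)) ?_
  filter_upwards [ae_restrict_of_ae hrpos] with t ht
  have h1 : ‖h t‖ ^ 2 ≤ 2 * ‖f t‖ ^ 2 + 2 * ‖g t‖ ^ 2 := by
    nlinarith [e t, norm_nonneg (h t), sq_nonneg (‖f t‖ - ‖g t‖), norm_nonneg (f t), norm_nonneg (g t)]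
  have := mul_le_mul_of_nonneg_right h1 ht.le
  linarith

theorem An_smul (m : ℂ) (f : ℝ → ℂ) (x : ℝ) :
    An x0 μ r x (fun t => m * f t) = ‖m‖ ^ 2 * An x0 μ r x f := by
  unfold An
  rw [← integral_const_mul]
  congr 1; ext t; rw [norm_mul]; ring

end forms

theorem Sol.diff {x0 : ℝ} {μ : Measure ℝ} {w r q : ℝ → ℝ} {z : ℂ} {u u1 : ℝ → ℂ}
    (hu : Sol x0 μ w r q z u u1) {c y : ℝ} (hc : x0 ≤ c) (hy : c ≤ y) :
    u y = u c + ∫ t in Ioc c y, u1 t * (w t : ℂ) := by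
  rw [hu.e1 y (hc.trans hy), hu.e1 c hc, ← Ioc_union_Ioc_eq_Ioc hc hy,
    setIntegral_union (Ioc_disjoint_Ioc_of_le le_rfl) measurableSet_Ioc (hu.i1 c)
      ((hu.i1 y).mono_set (Ioc_subset_Ioc_left hc))]
  ring

theorem nontriv {S : Set ℝ} (hcl : IsClosed S) (hub : ¬ BddAbove S) {x0 : ℝ}
    {μ : Measure ℝ}
    (hμ : ∀ c d : ℝ, c ≤ d → μ (Set.Ioc c d) = ENNReal.ofReal (tsSigma S d - tsSigma S c))
    {P r q w : ℝ → ℝ} (hr : LocallyIntegrable r μ) (hrpos : ∀ᵐ t ∂μ, 0 < r t)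
    (hwP : ∀ t, w t = P (gk S t))
    (hw : ∀ᵐ t ∂(volume.restrict (Ioi x0)), w t ≠ 0)
    {z : ℂ} {u u1 : ℝ → ℂ} (hu : Sol x0 μ w r q z u u1)
    (h0 : ∀ x, x0 ≤ x → An x0 μ r x u = 0) : u x0 = 0 ∧ u1 x0 = 0 := by
  have hg := gk_props hcl hub
  -- step 1
  have st1 : ∀ x, x0 ≤ x → ∀ᵐ t ∂(μ.restrict (Ioc x0 x)), u t = 0 := by
    intro x hx
    have := (setIntegral_eq_zero_iff_of_nonneg_ae (An_pos_ae hrpos u _) (An_int hr hu.cont x0 x)).1 (h0 x hx)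
    filter_upwards [this, ae_restrict_of_ae hrpos] with t ht ht2
    have : ‖u t‖ ^ 2 * r t = 0 := ht
    simpa [ht2.ne'] using this
  -- step 2
  have st2 : ∀ t ∈ S, x0 < t → u t = 0 := by
    intro t htS ht
    by_contra hne
    have hop : ∀ᶠ s in nhds t, u s ≠ 0 := hu.cont.continuousAt.eventually_ne hne
    obtain ⟨ε, hε, hball⟩ := Metric.eventually_nhds_iff.1 hop
    set c := max x0 (t - ε)
    set d := t + ε / 2
    have hct : c < t := max_lt ht (by linarith)
    have hc0 : x0 ≤ c := le_max_left _ _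
    have hpos : 0 < μ (Ioc c d) := by
      rw [hμ c d (by simp only [d]; linarith)]
      have h1 := (sig_props hcl hub c).2.2 t htS hct
      have h2 := (sig_props hcl hub d).2.1
      apply ENNReal.ofReal_pos.2
      simp only [d] at h2 ⊢
      linarith
    have hz := st1 d (by simp only [d]; linarith)
    rw [ae_restrict_iff' measurableSet_Ioc, ae_iff] at hz
    have : μ (Ioc c d) ≤ 0 := by
      rw [← hz]
      apply measure_mono
      intro s hs
      simp only [mem_ofPred_eq, Classical.not_imp]
      refine ⟨⟨hc0.trans_lt hs.1, hs.2⟩, hball ?_⟩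
      have h1 : t - ε < s := (le_max_right _ _).trans_lt hs.1
      have h2 : s ≤ t + ε / 2 := hs.2
      rw [Real.dist_eq, abs_lt]; constructor <;> linarith
    exact absurd this (not_le.2 hpos)
  -- step 3
  have st3 : ∀ x, x0 ≤ x → u1 x = u1 x0 := by
    intro x hx
    rw [hu.e2 x hx]
    have : ∫ t in Ioc x0 x, ((q t : ℂ) - z * r t) * u t ∂μ = 0 := by
      apply integral_eq_zero_of_ae
      filter_upwards [st1 x hx] with t ht
      simp [ht]
    rw [this, add_zero]
  obtain ⟨t1, ht1S, ht1⟩ := not_bddAbove_iff.1 hub x0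
  -- step 4
  have st4 : ∀ x, t1 ≤ x → u x = 0 := by
    intro x hx
    by_cases hxS : x ∈ S
    · exact st2 x hxS (ht1.trans_le hx)
    set A := S ∩ Iic x
    have hAne : A.Nonempty := ⟨t1, ht1S, hx⟩
    have hAb : BddAbove A := ⟨x, fun s hs => hs.2⟩
    have hAcl : IsClosed A := hcl.inter isClosed_Iic
    have hs1 : sSup A ∈ A := hAcl.csSup_mem hAne hAb
    set s1 := sSup A with hs1d
    have ht1s : t1 ≤ s1 := le_csSup hAb ⟨ht1S, hx⟩
    set s2 := gk S x with hs2d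
    obtain ⟨a1, a2, a3⟩ := hg x
    have hconst : ∀ t ∈ Ioc s1 s2, w t = w s2 := by
      intro t ht
      have e1 : gk S t = s2 := by
        apply le_antisymm ((hg t).2.2 _ a1 ht.2)
        apply a3 _ (hg t).1
        by_contra hlt
        have := le_csSup hAb (show gk S t ∈ A from ⟨(hg t).1, (not_le.1 hlt).le⟩)
        linarith [(hg t).2.1, ht.1]
      have e2 : gk S s2 = s2 := le_antisymm ((hg s2).2.2 _ a1 le_rfl) (hg s2).2.1
      rw [hwP, hwP, e1, e2]
    have hx0s1 : x0 ≤ s1 := ht1.le.trans ht1s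
    have hlin : ∀ y ∈ Icc s1 s2, u y = ((y - s1 : ℝ) : ℂ) * (u1 x0 * w s2) := by
      intro y hy
      rw [hu.diff hx0s1 hy.1, st2 s1 hs1.1 (ht1.trans_le ht1s), zero_add]
      have : ∫ t in Ioc s1 y, u1 t * (w t : ℂ) = ∫ t in Ioc s1 y, u1 x0 * (w s2 : ℂ) := by
        apply setIntegral_congr_fun measurableSet_Ioc
        intro t ht
        simp only []
        rw [st3 t (hx0s1.trans ht.1.le), hconst t ⟨ht.1, ht.2.trans hy.2⟩]
      rw [this, setIntegral_const, Complex.real_smul, Measure.real, Real.volume_Ioc,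
        ENNReal.toReal_ofReal (by linarith [hy.1])]
    have hs1x : s1 ≤ x := hs1.2
    have hs12 : s1 < s2 := lt_of_le_of_ne (hs1x.trans a2) (by
      intro he
      apply hxS
      have : x = s1 := le_antisymm (a2.trans he.ge) hs1x
      rw [this]; exact hs1.1)
    have hk := hlin s2 ⟨hs12.le, le_rfl⟩
    rw [st2 s2 a1 (ht1.trans_le (hx.trans a2))] at hk
    have hk2 : u1 x0 * (w s2 : ℂ) = 0 := by
      rcases mul_eq_zero.1 hk.symm with h | h
      · exfalso
        have : s2 - s1 = 0 := by exact_mod_cast h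
        linarith
      · exact h
    rw [hlin x ⟨hs1x, a2⟩, hk2, mul_zero]
  -- step 5
  have hk : u1 x0 = 0 := by
    have hI : IntervalIntegrable (fun t => u1 t * (w t : ℂ)) volume t1 (t1 + 1) := by
      rw [intervalIntegrable_iff_integrableOn_Ioc_of_le (by linarith)]
      exact (hu.i1 (t1 + 1)).mono_set (Ioc_subset_Ioc_left ht1.le)
    have hD := hI.ae_hasDerivAt_integral
    have hw' := (ae_restrict_iff' measurableSet_Ioi).1 hw
    have hex : ∃ x ∈ Ioo t1 (t1 + 1), (x ∈ uIcc t1 (t1 + 1) → ∀ c ∈ uIcc t1 (t1 + 1),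
        HasDerivAt (fun x => ∫ (t : ℝ) in c..x, u1 t * (w t : ℂ)) (u1 x * (w x : ℂ)) x) ∧
        (x ∈ Ioi x0 → w x ≠ 0) := by
      have hfr : ∃ᶠ x in ae volume, x ∈ Ioo t1 (t1 + 1) := by
        rw [frequently_ae_mem_iff, Real.volume_Ioo]
        simp
      exact (hfr.and_eventually (hD.and hw')).exists
    obtain ⟨x, hx, hd, hwx⟩ := hex
    have hux : uIcc t1 (t1 + 1) = Icc t1 (t1 + 1) := uIcc_of_le (by linarith)
    rw [hux] at hd
    have hd1 := hd ⟨hx.1.le, hx.2.le⟩ t1 ⟨le_rfl, by linarith⟩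
    have hev : (fun x => ∫ (t : ℝ) in t1..x, u1 t * (w t : ℂ)) =ᶠ[nhds x] fun _ => 0 := by
      filter_upwards [Ioi_mem_nhds hx.1] with y hy
      have hy : t1 < y := hy
      have := hu.diff ht1.le hy.le
      rw [st4 y hy.le, st4 t1 le_rfl, zero_add] at this
      rw [intervalIntegral.integral_of_le hy.le, ← this]
    have h2 : HasDerivAt (fun x => ∫ (t : ℝ) in t1..x, u1 t * (w t : ℂ)) 0 x :=
      (hasDerivAt_const x (0:ℂ)).congr_of_eventuallyEq hev
    have h3 := hd1.unique h2
    rw [st3 x (ht1.trans hx.1).le] at h3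
    rcases mul_eq_zero.1 h3 with h | h
    · exact h
    · exact absurd (by exact_mod_cast h) (hwx (ht1.trans hx.1))
  refine ⟨?_, hk⟩
  have h1 := hu.e1 t1 ht1.le
  rw [st4 t1 le_rfl] at h1
  have : ∫ t in Ioc x0 t1, u1 t * (w t : ℂ) = 0 := by
    rw [setIntegral_congr_fun (g := fun _ => 0) measurableSet_Ioc]
    · simp
    · intro t ht
      simp only []
      rw [st3 t ht.1.le, hk, zero_mul]
  rw [this, add_zero] at h1
  exact h1.symm


theorem sqWeight_eq (r : ℝ → ℝ) (u : ℝ → ℂ) (t : ℝ) :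
    sqWeight r u t = ENNReal.ofReal (‖u t‖ ^ 2 * r t) := by
  unfold sqWeight
  rw [ENNReal.ofReal_mul (by positivity), ENNReal.ofReal_pow (norm_nonneg _), ofReal_norm]
  rfl

theorem sq_fin {μ : Measure ℝ} {r : ℝ → ℝ} (hr : LocallyIntegrable r μ) {f : ℝ → ℂ}
    (hf : Continuous f) (c d : ℝ) : ∫⁻ t in Icc c d, sqWeight r f t ∂μ < ∞ := by
  have h1 : IntegrableOn (fun t => ‖f t‖ ^ 2 * r t) (Icc c d) μ :=
    (hr.integrableOn_isCompact isCompact_Icc).continuousOn_mul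
      (hf.norm.pow 2).continuousOn isCompact_Icc
  simp_rw [sqWeight_eq]
  exact h1.lintegral_lt_top

theorem l2_of_bdd {T : Set ℝ} {x0 : ℝ} (hT : tsKappa T ⊆ Ici x0) {μ : Measure ℝ} {r : ℝ → ℝ}
    (hr : LocallyIntegrable r μ)
    (hrpos : ∀ᵐ t ∂μ, 0 < r t) {f : ℝ → ℂ} (hf : Continuous f) (C : ℝ)
    (h : ∀ n : ℕ, An x0 μ r n f ≤ C) : L2NearRight T μ r f := by
  intro c hc
  have hsub : {t | c ≤ t ∧ ∃ s ∈ T, t < s} ∩ tsKappa T ⊆ Icc x0 x0 ∪ Ioi x0 := by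
    intro t ht
    rcases eq_or_lt_of_le (mem_Ici.1 (hT ht.2)) with he | hl
    · left; rw [he]; simp
    · right; exact hl
  refine (lintegral_mono_set hsub).trans_lt ((lintegral_union_le _ _ _).trans_lt ?_)
  refine ENNReal.add_lt_top.2 ⟨sq_fin hr hf _ _, ?_⟩
  have hU : Ioi x0 = ⋃ n : ℕ, Ioc x0 (n : ℝ) := by
    ext t
    simp only [mem_Ioi, mem_iUnion, mem_Ioc]
    exact ⟨fun ht => (exists_nat_ge t).imp fun n hn => ⟨ht, hn⟩, fun ⟨n, hn⟩ => hn.1⟩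
  have hdir : Directed (· ⊆ ·) (fun n : ℕ => Ioc x0 (n : ℝ)) :=
    Monotone.directed_le (fun a b hab => Ioc_subset_Ioc_right (by exact_mod_cast hab))
  rw [hU, setLIntegral_iUnion_of_directed _ hdir]
  refine (iSup_le fun n => ?_).trans_lt (ENNReal.ofReal_lt_top (r := C))
  have h1 := ofReal_integral_eq_lintegral_ofReal (An_int hr hf x0 n) (An_pos_ae hrpos f _)
  simp_rw [sqWeight_eq]
  rw [← h1]
  exact ENNReal.ofReal_le_ofReal (h n)

theorem l2_comb {T : Set ℝ} {x0 : ℝ} (hT : tsKappa T ⊆ Ici x0)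
    (hTm : MeasurableSet (tsKappa T)) {μ : Measure ℝ}
    {r : ℝ → ℝ} (hr : LocallyIntegrable r μ)
    {f g h : ℝ → ℂ} (hf : Continuous f)
    (a b : ℂ) (e : ∀ t, x0 ≤ t → h t = a * f t + b * g t)
    (h1 : L2NearRight T μ r f) (h2 : L2NearRight T μ r g) : L2NearRight T μ r h := by
  intro c hc
  have h1 := h1 c hc
  have h2 := h2 c hc
  set s := {t | c ≤ t ∧ ∃ s ∈ T, t < s} ∩ tsKappa T with hs
  set A := 2 * ‖a‖₊ ^ 2 with hA
  set B := 2 * ‖b‖₊ ^ 2 with hB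
  have hle : ∀ t ∈ s, sqWeight r h t ≤ (A : ℝ≥0∞) * sqWeight r f t + (B : ℝ≥0∞) * sqWeight r g t := by
    intro t ht
    unfold sqWeight
    rw [← mul_assoc, ← mul_assoc, ← add_mul]
    gcongr
    norm_cast
    rw [← NNReal.coe_le_coe, e t (hT ht.2)]
    push_cast
    have hn := norm_add_le (a * f t) (b * g t)
    rw [norm_mul, norm_mul] at hn
    have := norm_nonneg (a * f t + b * g t)
    simp only [hA, hB]
    push_cast
    nlinarith [sq_nonneg (‖a‖ * ‖f t‖ - ‖b‖ * ‖g t‖), norm_nonneg a, norm_nonneg b]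
  have hm : AEMeasurable (fun t => (A : ℝ≥0∞) * sqWeight r f t) (μ.restrict s) := by
    refine AEMeasurable.const_mul ?_ _
    have m1 : AEMeasurable (fun t => ((‖f t‖₊ : ℝ≥0∞)) ^ 2) (μ.restrict s) :=
      ((ENNReal.continuous_coe.comp hf.nnnorm).measurable.pow_const 2).aemeasurable
    have m2 : AEMeasurable (fun t => ENNReal.ofReal (r t)) (μ.restrict s) :=
      (hr.aestronglyMeasurable.aemeasurable.restrict).ennreal_ofReal
    exact m1.mul m2
  have hae : ∀ᵐ t ∂(μ.restrict s), sqWeight r h t ≤ (A : ℝ≥0∞) * sqWeight r f t + (B : ℝ≥0∞) * sqWeight r g t := by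
    have hsm : MeasurableSet s := by
      refine MeasurableSet.inter ?_ hTm
      have : {t | c ≤ t ∧ ∃ s ∈ T, t < s} = Ici c ∩ ⋃ s ∈ T, Iio s := by
        ext t; simp
      rw [this]
      exact measurableSet_Ici.inter (isOpen_biUnion fun s _ => isOpen_Iio).measurableSet
    filter_upwards [ae_restrict_mem hsm] with t ht using hle t ht
  refine (lintegral_mono_ae hae).trans_lt ?_
  rw [lintegral_add_left' hm, lintegral_const_mul' _ _ ENNReal.coe_ne_top,
    lintegral_const_mul' _ _ ENNReal.coe_ne_top]
  exact ENNReal.add_lt_top.2 ⟨ENNReal.mul_lt_top ENNReal.coe_lt_top h1,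
    ENNReal.mul_lt_top ENNReal.coe_lt_top h2⟩



section weyl
variable {x0 : ℝ} {μ : Measure ℝ} [IsLocallyFiniteMeasure μ] {w r q : ℝ → ℝ} {z z' : ℂ}
  {θ θ1 φ φ1 : ℝ → ℂ} {θ' θ1' φ' φ1' : ℝ → ℂ} {c s : ℝ}

/-- initial data -/
structure Ini (x0 c s : ℝ) (θ θ1 φ φ1 : ℝ → ℂ) : Prop where
  a : θ x0 = c
  b : θ1 x0 = -(s : ℂ)
  d : φ x0 = s
  e : φ1 x0 = c

theorem wr_one (hr : LocallyIntegrable r μ) (hcs : (c : ℂ) ^ 2 + (s : ℂ) ^ 2 = 1)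
    (hθ : Sol x0 μ w r q z θ θ1) (hφ : Sol x0 μ w r q z φ φ1) (hi : Ini x0 c s θ θ1 φ φ1)
    {x : ℝ} (hx : x0 ≤ x) : Wr θ θ1 φ φ1 x = 1 := by
  have h := hθ.lagrange hr hφ hx
  rw [sub_self, zero_mul, sub_eq_zero] at h
  rw [h]
  unfold Wr
  rw [hi.a, hi.b, hi.d, hi.e]
  linear_combination hcs

/-- any solution is a combination -/
theorem sol_comb (hr : LocallyIntegrable r μ) (hcs : (c : ℂ) ^ 2 + (s : ℂ) ^ 2 = 1)
    (hθ : Sol x0 μ w r q z θ θ1) (hφ : Sol x0 μ w r q z φ φ1) (hi : Ini x0 c s θ θ1 φ φ1)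
    {u u1 : ℝ → ℂ} (hu : Sol x0 μ w r q z u u1)
    {x : ℝ} (hx : x0 ≤ x) : u x = Wr u u1 φ φ1 x0 * θ x + Wr θ θ1 u u1 x0 * φ x := by
  have h := hθ.lagrange hr hu hx
  have h2 := hu.lagrange hr hφ hx
  rw [sub_self, zero_mul, sub_eq_zero] at h h2
  rw [← h, ← h2]
  have h3 := wr_one hr hcs hθ hφ hi hx
  unfold Wr at *
  linear_combination (-u x) * h3

theorem conj_eq (hr : LocallyIntegrable r μ) (hcs : (c : ℂ) ^ 2 + (s : ℂ) ^ 2 = 1)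
    (hθ : Sol x0 μ w r q z θ θ1) (hφ : Sol x0 μ w r q z φ φ1) (hi : Ini x0 c s θ θ1 φ φ1)
    (hθ' : Sol x0 μ w r q (starRingEnd ℂ z) θ' θ1') (hφ' : Sol x0 μ w r q (starRingEnd ℂ z) φ' φ1')
    (hi' : Ini x0 c s θ' θ1' φ' φ1')
    {x : ℝ} (hx : x0 ≤ x) : starRingEnd ℂ (θ x) = θ' x ∧ starRingEnd ℂ (φ x) = φ' x := by
  have h1 := sol_comb hr hcs hθ' hφ' hi' hθ.conj hx
  have h2 := sol_comb hr hcs hθ' hφ' hi' hφ.conj hx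
  simp only [Wr, hi.a, hi.b, hi.d, hi.e, hi'.a, hi'.b, hi'.d, hi'.e, map_neg, Complex.conj_ofReal] at h1 h2
  constructor
  · linear_combination h1 + θ' x * hcs
  · linear_combination h2 + φ' x * hcs

theorem lag_comb (hr : LocallyIntegrable r μ) (hcs : (c : ℂ) ^ 2 + (s : ℂ) ^ 2 = 1)
    (hθ : Sol x0 μ w r q z θ θ1) (hφ : Sol x0 μ w r q z φ φ1) (hi : Ini x0 c s θ θ1 φ φ1)
    (hθ' : Sol x0 μ w r q z' θ' θ1') (hφ' : Sol x0 μ w r q z' φ' φ1')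
    (hi' : Ini x0 c s θ' θ1' φ' φ1')
    {x : ℝ} (hx : x0 ≤ x) (m m' : ℂ) (h1 : θ x + m * φ x = 0) (h2 : θ' x + m' * φ' x = 0) :
    m - m' = (z - z') * Bf x0 μ r x (fun t => θ t + m * φ t) (fun t => θ' t + m' * φ' t) := by
  have h := (hθ.comb hφ m).lagrange hr (hθ'.comb hφ' m') hx
  unfold Bf
  rw [← h]
  unfold Wr
  simp only [h1, h2, hi.a, hi.b, hi.d, hi.e, hi'.a, hi'.b, hi'.d, hi'.e]
  linear_combination -(m - m') * hcs

theorem lag_self (hr : LocallyIntegrable r μ) (hcs : (c : ℂ) ^ 2 + (s : ℂ) ^ 2 = 1)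
    (hθ : Sol x0 μ w r q z θ θ1) (hφ : Sol x0 μ w r q z φ φ1) (hi : Ini x0 c s θ θ1 φ φ1)
    (hz : z.im ≠ 0)
    {x : ℝ} (hx : x0 ≤ x) (m : ℂ) (h1 : θ x + m * φ x = 0) :
    An x0 μ r x (fun t => θ t + m * φ t) = m.im / z.im := by
  have h := (hθ.comb hφ m).lagrange hr (hθ.comb hφ m).conj hx
  have hb := An_Bf (x0 := x0) (μ := μ) (r := r) (fun t => θ t + m * φ t) x
  unfold Bf at hb
  rw [hb] at h
  unfold Wr at h
  simp only [h1, hi.a, hi.b, hi.d, hi.e, map_add, map_mul, map_neg, Complex.conj_ofReal, map_zero] at h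
  have h2 : m - starRingEnd ℂ m = (z - starRingEnd ℂ z) * (An x0 μ r x (fun t => θ t + m * φ t) : ℂ) := by
    rw [← h]
    linear_combination -(m - starRingEnd ℂ m) * hcs
  rw [Complex.sub_conj, Complex.sub_conj] at h2
  have h4 := congrArg Complex.im h2
  simp at h4
  rw [eq_div_iff hz]; linarith

theorem phi_ne (hr : LocallyIntegrable r μ)
    (hφ : Sol x0 μ w r q z φ φ1) (hφ0 : φ x0 = (s : ℂ)) (hφ1 : φ1 x0 = (c : ℂ))
    (hz : z.im ≠ 0)
    {x : ℝ} (hx : x0 ≤ x) (hpos : 0 < An x0 μ r x φ) : φ x ≠ 0 := by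
  intro h0
  have h := hφ.lagrange hr hφ.conj hx
  have hb := An_Bf (x0 := x0) (μ := μ) (r := r) φ x
  unfold Bf at hb
  rw [hb] at h
  unfold Wr at h
  simp only [h0, hφ0, hφ1, Complex.conj_ofReal, map_zero] at h
  have h2 : (z - starRingEnd ℂ z) * (An x0 μ r x φ : ℂ) = 0 := by
    rw [← h]; ring
  rcases mul_eq_zero.1 h2 with h | h
  · rw [Complex.sub_conj] at h
    simp at h
    exact hz h
  · exact hpos.ne' (by exact_mod_cast h)

theorem weyl_exists {T : Set ℝ} (hT : tsKappa T ⊆ Ici x0) (hTm : MeasurableSet (tsKappa T))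
    (hr : LocallyIntegrable r μ) (hrpos : ∀ᵐ t ∂μ, 0 < r t) (hcs : (c : ℂ) ^ 2 + (s : ℂ) ^ 2 = 1)
    (hθ : Sol x0 μ w r q z θ θ1) (hφ : Sol x0 μ w r q z φ φ1) (hi : Ini x0 c s θ θ1 φ φ1)
    (hz : z.im ≠ 0) (hnt : ∃ x, x0 ≤ x ∧ 0 < An x0 μ r x φ)
    (hLP : ¬ (L2NearRight T μ r θ ∧ L2NearRight T μ r φ)) :
    ∃ m : ℂ, (∀ n : ℕ, An x0 μ r n (fun t => θ t + m * φ t) ≤ m.im / z.im) ∧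
      Tendsto (fun n : ℕ => -θ n / φ n) atTop (nhds m) ∧ ∀ᶠ n : ℕ in atTop, φ n ≠ 0 := by
  obtain ⟨x, hx0, hx⟩ := hnt
  obtain ⟨n0, hn0⟩ := exists_nat_ge x
  have hge : ∀ n : ℕ, n0 ≤ n → x0 ≤ n := fun n hn =>
    hx0.trans (hn0.trans (by exact_mod_cast hn))
  have hpos : ∀ n : ℕ, n0 ≤ n → 0 < An x0 μ r n φ := fun n hn =>
    hx.trans_le (An_mono hr hrpos hφ.cont (hn0.trans (by exact_mod_cast hn)))
  have hne : ∀ n : ℕ, n0 ≤ n → φ n ≠ 0 := fun n hn =>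
    phi_ne hr hφ hi.d hi.e hz (hge n hn) (hpos n hn)
  have hcont : ∀ m : ℂ, Continuous (fun t => θ t + m * φ t) := fun m => (hθ.comb hφ m).cont
  set D : ℕ → Set ℂ := fun n => {m | An x0 μ r n (fun t => θ t + m * φ t) ≤ m.im / z.im} with hD
  have hanti : ∀ {n k : ℕ}, n ≤ k → D k ⊆ D n := by
    intro n k hnk m hm
    exact (An_mono hr hrpos (hcont m) (by exact_mod_cast hnk)).trans hm
  have hmem : ∀ n : ℕ, n0 ≤ n → -θ n / φ n ∈ D n := by
    intro n hn
    refine (lag_self hr hcs hθ hφ hi hz (hge n hn) _ ?_).le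
    field_simp [hne n hn]
    ring
  have hclosed : ∀ n, IsClosed (D n) := by
    intro n
    have e : ∀ m : ℂ, An x0 μ r n (fun t => θ t + m * φ t) = An x0 μ r n θ +
        2 * (starRingEnd ℂ m * Bf x0 μ r n θ (fun t => starRingEnd ℂ (φ t))).re +
        ‖starRingEnd ℂ m‖ ^ 2 * An x0 μ r n (fun t => starRingEnd ℂ (φ t)) := by
      intro m
      rw [← An_expand hr hθ.cont hφ.conj.cont]
      simp
    simp only [hD, e]
    refine isClosed_le ?_ ?_
    · fun_prop
    · fun_prop
  obtain ⟨R, hR⟩ : ∃ R : ℝ, ∀ m ∈ D n0, ‖m‖ ≤ R := by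
    set Φ := An x0 μ r n0 φ with hΦ
    set Θ := An x0 μ r n0 θ with hΘ
    have hΦ0 : 0 < Φ := hpos n0 le_rfl
    have hΘ0 : 0 ≤ Θ := An_nonneg hrpos _ _
    refine ⟨max 1 ((2 / |z.im| + 2 * Θ) / Φ), fun m hm => ?_⟩
    by_cases h1 : ‖m‖ ≤ 1
    · exact h1.trans (le_max_left _ _)
    push Not at h1
    refine le_trans ?_ (le_max_right _ _)
    have h2 := An_add_le (x0 := x0) hr hrpos (hcont m) hθ.cont (continuous_const.mul hφ.cont)
      (h := fun t => m * φ t) (fun t => by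
        calc ‖m * φ t‖ = ‖(θ t + m * φ t) - θ t‖ := by congr 1; ring
          _ ≤ _ := norm_sub_le _ _) n0
    rw [An_smul, ← hΦ, ← hΘ] at h2
    have h3 : An x0 μ r n0 (fun t => θ t + m * φ t) ≤ ‖m‖ / |z.im| := by
      refine le_trans hm ?_
      refine (le_abs_self _).trans ?_
      rw [abs_div]
      gcongr
      exact Complex.abs_im_le_norm m
    rw [le_div_iff₀ hΦ0]
    have h4 : ‖m‖ * (‖m‖ * Φ) ≤ ‖m‖ * (2 / |z.im| + 2 * Θ) := by
      have : ‖m‖ * (2 / |z.im| + 2 * Θ) = 2 * (‖m‖ / |z.im|) + 2 * Θ * ‖m‖ := by ring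
      rw [this]
      nlinarith
    exact le_of_mul_le_mul_left h4 (by linarith)
  have hcpt : IsCompact (D n0) := by
    refine Metric.isCompact_of_isClosed_isBounded (hclosed n0) ?_
    refine (Metric.isBounded_closedBall (x := (0:ℂ)) (r := R)).subset fun m hm => ?_
    simpa using hR m hm
  obtain ⟨m, hm⟩ := IsCompact.nonempty_iInter_of_sequence_nonempty_isCompact_isClosed
    (fun i => D (n0 + i)) (fun i => hanti (by omega)) (fun i => ⟨_, hmem _ (by omega)⟩) hcpt
    (fun i => hclosed _)
  rw [mem_iInter] at hm
  have hmD : ∀ n, m ∈ D n := fun n => hanti (by omega) (hm n)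
  refine ⟨m, hmD, ?_, eventually_atTop.2 ⟨n0, hne⟩⟩
  have hψ : L2NearRight T μ r (fun t => θ t + m * φ t) :=
    l2_of_bdd hT hr hrpos (hcont m) _ hmD
  have hΦ : Tendsto (fun n : ℕ => An x0 μ r n φ) atTop atTop := by
    refine tendsto_atTop_atTop_of_monotone
      (fun a b hab => An_mono hr hrpos hφ.cont (by exact_mod_cast hab)) ?_
    by_contra hcon
    push Not at hcon
    obtain ⟨C, hC⟩ := hcon
    have hφL : L2NearRight T μ r φ := l2_of_bdd hT hr hrpos hφ.cont C (fun n => (hC n).le)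
    refine hLP ⟨l2_comb hT hTm hr (hcont m) 1 (-m) (fun t _ => by ring) hψ hφL, hφL⟩
  have hbound : ∀ᶠ n : ℕ in atTop, ‖-θ n / φ n - m‖ ^ 2 ≤ (4 * (R / |z.im|)) / An x0 μ r n φ := by
    filter_upwards [eventually_ge_atTop n0] with n hn
    rw [le_div_iff₀ (hpos n hn), ← An_smul]
    have h2 := An_add_le (x0 := x0) hr hrpos (hcont (-θ n / φ n)) (hcont m)
      (continuous_const.mul hφ.cont)
      (h := fun t => (-θ n / φ n - m) * φ t) (fun t => by
        calc ‖(-θ n / φ n - m) * φ t‖ = ‖(θ t + (-θ n / φ n) * φ t) - (θ t + m * φ t)‖ := by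
              congr 1; ring
          _ ≤ _ := norm_sub_le _ _) n
    have h3 : ∀ k ∈ D n, An x0 μ r n (fun t => θ t + k * φ t) ≤ R / |z.im| := by
      intro k hk
      refine le_trans hk ?_
      refine (le_abs_self _).trans ?_
      rw [abs_div]
      gcongr
      exact (Complex.abs_im_le_norm k).trans (hR k (hanti hn hk))
    linarith [h3 _ (hmem n hn), h3 _ (hmD n)]
  have hlim : Tendsto (fun n : ℕ => ‖-θ n / φ n - m‖ ^ 2) atTop (nhds 0) :=
    squeeze_zero' (Eventually.of_forall fun n => by positivity) hbound (hΦ.const_div_atTop _)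
  rw [tendsto_iff_norm_sub_tendsto_zero]
  have := hlim.sqrt
  simpa using this

end weyl


section kernel
variable {x0 : ℝ} {μ : Measure ℝ} [IsLocallyFiniteMeasure μ] {w r q : ℝ → ℝ}
  {θ θ1 φ φ1 : ℂ → ℝ → ℂ} {c s : ℝ}

theorem kern_fin (hr : LocallyIntegrable r μ) (hrpos : ∀ᵐ t ∂μ, 0 < r t)
    (hcs : (c : ℂ) ^ 2 + (s : ℂ) ^ 2 = 1)
    (hθ : ∀ z, Sol x0 μ w r q z (θ z) (θ1 z)) (hφ : ∀ z, Sol x0 μ w r q z (φ z) (φ1 z))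
    (hi : ∀ z, Ini x0 c s (θ z) (θ1 z) (φ z) (φ1 z))
    {x : ℝ} (hx : x0 ≤ x) (m : ℂ → ℂ) {z z' v : ℂ} (hz : z.im ≠ 0) (hz' : z'.im ≠ 0)
    (hv : v.im ≠ 0) (hzv : z ≠ v) (hz'v : z' ≠ v) (hzz : z ≠ starRingEnd ℂ z')
    (e1 : θ z x + m z * φ z x = 0) (e2 : θ z' x + m z' * φ z' x = 0)
    (e3 : θ v x + m v * φ v x = 0) :
    ‖(m z - m v) / (z - v)‖ ^ 2 ≤ (m z).im / z.im * ((m v).im / v.im) ∧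
    ‖(m z - m v) / (z - v) - (m z' - m v) / (z' - v)‖ ^ 2 ≤
      ((m z).im / z.im - 2 * ((m z - starRingEnd ℂ (m z')) / (z - starRingEnd ℂ z')).re
        + (m z').im / z'.im) * ((m v).im / v.im) := by
  have hG : ∀ a k, Continuous (fun t => θ a t + k * φ a t) := fun a k => ((hθ a).comb (hφ a) k).cont
  have n1 := lag_self hr hcs (hθ z) (hφ z) (hi z) hz hx _ e1
  have n2 := lag_self hr hcs (hθ z') (hφ z') (hi z') hz' hx _ e2
  have n3 := lag_self hr hcs (hθ v) (hφ v) (hi v) hv hx _ e3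
  have b1 := lag_comb hr hcs (hθ z) (hφ z) (hi z) (hθ v) (hφ v) (hi v) hx _ _ e1 e3
  have b2 := lag_comb hr hcs (hθ z') (hφ z') (hi z') (hθ v) (hφ v) (hi v) hx _ _ e2 e3
  have cj : ∀ t, x0 ≤ t → starRingEnd ℂ (θ z' t + m z' * φ z' t) =
      θ (starRingEnd ℂ z') t + starRingEnd ℂ (m z') * φ (starRingEnd ℂ z') t := by
    intro t ht
    obtain ⟨h1, h2⟩ := conj_eq hr hcs (hθ z') (hφ z') (hi z') (hθ (starRingEnd ℂ z'))
      (hφ (starRingEnd ℂ z')) (hi (starRingEnd ℂ z')) ht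
    rw [map_add, map_mul, h1, h2]
  have e4 : θ (starRingEnd ℂ z') x + starRingEnd ℂ (m z') * φ (starRingEnd ℂ z') x = 0 := by
    rw [← cj x hx, e2, map_zero]
  have b3 := lag_comb hr hcs (hθ z) (hφ z) (hi z) (hθ _) (hφ _) (hi _) hx _ _ e1 e4
  have b4 : Bf x0 μ r x (fun t => θ z t + m z * φ z t)
      (fun t => starRingEnd ℂ (θ z' t + m z' * φ z' t)) =
      Bf x0 μ r x (fun t => θ z t + m z * φ z t) (fun t => θ (starRingEnd ℂ z') t +
        starRingEnd ℂ (m z') * φ (starRingEnd ℂ z') t) := by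
    unfold Bf
    refine setIntegral_congr_fun measurableSet_Ioc fun t ht => ?_
    simp only [cj t ht.1.le]
  have q1 : (m z - m v) / (z - v) = Bf x0 μ r x (fun t => θ z t + m z * φ z t)
      (fun t => θ v t + m v * φ v t) := by
    rw [b1, mul_div_cancel_left₀ _ (sub_ne_zero.2 hzv)]
  have q2 : (m z' - m v) / (z' - v) = Bf x0 μ r x (fun t => θ z' t + m z' * φ z' t)
      (fun t => θ v t + m v * φ v t) := by
    rw [b2, mul_div_cancel_left₀ _ (sub_ne_zero.2 hz'v)]
  have q3 : (m z - starRingEnd ℂ (m z')) / (z - starRingEnd ℂ z') =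
      Bf x0 μ r x (fun t => θ z t + m z * φ z t)
      (fun t => starRingEnd ℂ (θ z' t + m z' * φ z' t)) := by
    rw [b4, b3, mul_div_cancel_left₀ _ (sub_ne_zero.2 hzz)]
  constructor
  · rw [q1, ← n1, ← n3]
    exact cauchy_schwarz hr hrpos (hG _ _) (hG _ _) x
  · have hd : Bf x0 μ r x (fun t => θ z t + m z * φ z t) (fun t => θ v t + m v * φ v t) -
        Bf x0 μ r x (fun t => θ z' t + m z' * φ z' t) (fun t => θ v t + m v * φ v t) =
        Bf x0 μ r x (fun t => (θ z t + m z * φ z t) - (θ z' t + m z' * φ z' t))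
          (fun t => θ v t + m v * φ v t) := by
      unfold Bf
      refine Eq.trans (integral_sub (intOn_cont hr ((hG z (m z)).mul (hG v (m v))) x0 x)
        (intOn_cont hr ((hG z' (m z')).mul (hG v (m v))) x0 x)).symm ?_
      congr 1; ext t; simp only [Pi.mul_apply]; ring
    have hA : An x0 μ r x (fun t => (θ z t + m z * φ z t) - (θ z' t + m z' * φ z' t)) =
        (m z).im / z.im - 2 * ((m z - starRingEnd ℂ (m z')) / (z - starRingEnd ℂ z')).re
        + (m z').im / z'.im := by
      have := An_expand (x0 := x0) hr (hG z (m z))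
        (Complex.continuous_conj.comp (hG z' (m z'))) (-1) x
      have h5 : An x0 μ r x ((starRingEnd ℂ) ∘ (fun t => θ z' t + m z' * φ z' t)) =
          (m z').im / z'.im := by
        rw [← n2]; unfold An; simp only [Function.comp_apply, Complex.norm_conj]
      rw [h5, n1] at this
      rw [q3]
      have h6 : (fun t => (θ z t + m z * φ z t) - (θ z' t + m z' * φ z' t)) =
        (fun t => (θ z t + m z * φ z t) + starRingEnd ℂ (-1 * ((starRingEnd ℂ) ∘ (fun t => θ z' t + m z' * φ z' t)) t)) := by
        ext t; simp; ring
      rw [h6]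
      rw [show (fun t => starRingEnd ℂ (θ z' t + m z' * φ z' t)) = ((starRingEnd ℂ) ∘ (fun t => θ z' t + m z' * φ z' t)) from rfl]
      simp only [Complex.neg_re, neg_mul, one_mul, norm_neg, norm_one, one_pow, map_neg, map_mul] at this ⊢
      rw [this]
      ring
    rw [q1, q2, hd, ← hA, ← n3]
    exact cauchy_schwarz hr hrpos ((hG _ _).sub (hG _ _)) (hG _ _) x
end kernel

theorem analytic_of_kern (m : ℂ → ℂ)
    (h : ∀ z z' v : ℂ, z.im ≠ 0 → z'.im ≠ 0 → v.im ≠ 0 → z ≠ v → z' ≠ v → z ≠ starRingEnd ℂ z' →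
    ‖(m z - m v) / (z - v)‖ ^ 2 ≤ (m z).im / z.im * ((m v).im / v.im) ∧
    ‖(m z - m v) / (z - v) - (m z' - m v) / (z' - v)‖ ^ 2 ≤
      ((m z).im / z.im - 2 * ((m z - starRingEnd ℂ (m z')) / (z - starRingEnd ℂ z')).re
        + (m z').im / z'.im) * ((m v).im / v.im)) :
    AnalyticOnNhd ℂ m {z : ℂ | z.im ≠ 0} := by
  have hopen : IsOpen {z : ℂ | z.im ≠ 0} := isOpen_ne_fun Complex.continuous_im continuous_const
  refine DifferentiableOn.analyticOnNhd (fun v hv => ?_) hopen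
  have hv : v.im ≠ 0 := hv
  have hvc : ∀ a : ℂ, a.im ≠ 0 → a ≠ starRingEnd ℂ a := by
    intro a ha h0
    have := congrArg Complex.im h0
    simp at this
    exact ha (by linarith)
  have hnv : ∀ᶠ z in nhds v, z.im ≠ 0 := hopen.mem_nhds hv
  -- continuity
  have hcont : ContinuousAt m v := by
    set C : ℝ := 2 / |v.im| * |(m v).im / v.im| with hC
    have hC0 : 0 ≤ C := by positivity
    have hb : ∀ᶠ z in nhds v, ‖m z - m v‖ ^ 2 ≤
        2 * (‖z - v‖ ^ 2 * C * ‖m v‖) + (‖z - v‖ ^ 2 * C) ^ 2 := by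
      have h2 : ∀ᶠ z in nhds v, |v.im| / 2 < |z.im| := by
        have : Tendsto (fun z : ℂ => |z.im|) (nhds v) (nhds |v.im|) :=
          (continuous_abs.comp Complex.continuous_im).continuousAt
        exact this.eventually (lt_mem_nhds (by have := abs_pos.2 hv; linarith))
      filter_upwards [h2, hnv] with z hz2 hz
      by_cases hzv : z = v
      · subst hzv; simp
      have k := (h z z v hz hz hv hzv hzv (hvc z hz)).1
      have hpos : 0 < ‖z - v‖ := norm_pos_iff.2 (sub_ne_zero.2 hzv)
      rw [norm_div, div_pow, div_le_iff₀ (by positivity)] at k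
      have k2 : (m z).im / z.im * ((m v).im / v.im) ≤ (‖m v‖ + ‖m z - m v‖) * C := by
        refine (le_abs_self _).trans ?_
        rw [abs_mul, hC, ← mul_assoc]
        gcongr
        rw [abs_div, div_le_iff₀ (by positivity)]
        have h3 : |(m z).im| ≤ ‖m v‖ + ‖m z - m v‖ := by
          refine (Complex.abs_im_le_norm _).trans ?_
          calc ‖m z‖ = ‖m v + (m z - m v)‖ := by congr 1; ring
            _ ≤ _ := norm_add_le _ _
        have hv' := abs_pos.2 hv
        have h4 : 1 ≤ 2 / |v.im| * |z.im| := by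
          rw [div_mul_eq_mul_div, le_div_iff₀ hv']; linarith
        calc |(m z).im| ≤ (‖m v‖ + ‖m z - m v‖) * 1 := by linarith
          _ ≤ (‖m v‖ + ‖m z - m v‖) * (2 / |v.im| * |z.im|) := by gcongr
          _ = _ := by ring
      have k3 := k.trans (mul_le_mul_of_nonneg_right k2 (sq_nonneg ‖z - v‖))
      nlinarith [sq_nonneg (‖m z - m v‖ - ‖z - v‖ ^ 2 * C)]
    have hl : Tendsto (fun z => 2 * (‖z - v‖ ^ 2 * C * ‖m v‖) + (‖z - v‖ ^ 2 * C) ^ 2)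
        (nhds v) (nhds 0) := by
      have : Continuous (fun z : ℂ => 2 * (‖z - v‖ ^ 2 * C * ‖m v‖) + (‖z - v‖ ^ 2 * C) ^ 2) := by
        fun_prop
      have := this.tendsto v
      simpa using this
    have h1 := (squeeze_zero' (Eventually.of_forall fun z => by positivity) hb hl).sqrt
    have h2 : Tendsto (fun z => ‖m z - m v‖) (nhds v) (nhds 0) := by simpa using h1
    exact tendsto_iff_norm_sub_tendsto_zero.2 h2
  set l := nhdsWithin v {v}ᶜ with hl
  have hlm : Tendsto m l (nhds (m v)) := hcont.mono_left nhdsWithin_le_nhds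
  have hlid : Tendsto (fun z : ℂ => z) l (nhds v) := nhdsWithin_le_nhds
  have hc : Cauchy (map (fun z => (m z - m v) / (z - v)) l) := by
    rw [cauchy_map_iff]
    refine ⟨inferInstance, ?_⟩
    rw [tendsto_uniformity_iff_dist_tendsto_zero]
    have f1 : Tendsto (fun p : ℂ × ℂ => p.1) (l ×ˢ l) (nhds v) := hlid.comp tendsto_fst
    have f2 : Tendsto (fun p : ℂ × ℂ => p.2) (l ×ˢ l) (nhds v) := hlid.comp tendsto_snd
    have g1 : Tendsto (fun p : ℂ × ℂ => m p.1) (l ×ˢ l) (nhds (m v)) := hlm.comp tendsto_fst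
    have g2 : Tendsto (fun p : ℂ × ℂ => m p.2) (l ×ˢ l) (nhds (m v)) := hlm.comp tendsto_snd
    have im {f : ℂ × ℂ → ℂ} {a : ℂ} (hf : Tendsto f (l ×ˢ l) (nhds a)) :
      Tendsto (fun p => (f p).im) (l ×ˢ l) (nhds a.im) :=
      (Complex.continuous_im.tendsto a).comp hf
    have re {f : ℂ × ℂ → ℂ} {a : ℂ} (hf : Tendsto f (l ×ˢ l) (nhds a)) :
      Tendsto (fun p => (f p).re) (l ×ˢ l) (nhds a.re) :=
      (Complex.continuous_re.tendsto a).comp hf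
    have cj {f : ℂ × ℂ → ℂ} {a : ℂ} (hf : Tendsto f (l ×ˢ l) (nhds a)) :
      Tendsto (fun p => starRingEnd ℂ (f p)) (l ×ˢ l) (nhds (starRingEnd ℂ a)) :=
      (Complex.continuous_conj.tendsto a).comp hf
    have hE := (((((im g1).div (im f1) hv).sub ((re ((g1.sub (cj g2)).div (f1.sub (cj f2))
      (sub_ne_zero.2 (hvc v hv)))).const_mul 2)).add ((im g2).div (im f2) hv)).mul_const
        ((m v).im / v.im))
    have e0 : ((m v).im / v.im - 2 * ((m v - starRingEnd ℂ (m v)) / (v - starRingEnd ℂ v)).re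
        + (m v).im / v.im) * ((m v).im / v.im) = 0 := by
      have : (m v - starRingEnd ℂ (m v)) / (v - starRingEnd ℂ v) = (((m v).im / v.im : ℝ) : ℂ) := by
        rw [Complex.sub_conj, Complex.sub_conj, mul_div_mul_right _ _ Complex.I_ne_zero]
        push_cast
        rw [mul_div_mul_left _ _ two_ne_zero]
      rw [this, Complex.ofReal_re]; ring
    rw [e0] at hE
    have ev : ∀ᶠ p : ℂ × ℂ in l ×ˢ l, dist ((m p.1 - m v) / (p.1 - v)) ((m p.2 - m v) / (p.2 - v)) ^ 2
        ≤ ((m p.1).im / p.1.im - 2 * ((m p.1 - starRingEnd ℂ (m p.2)) / (p.1 - starRingEnd ℂ p.2)).re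
        + (m p.2).im / p.2.im) * ((m v).im / v.im) := by
      have hl1 : ∀ᶠ z in l, z ≠ v ∧ z.im ≠ 0 := by
        refine Eventually.and ?_ (hnv.filter_mono nhdsWithin_le_nhds)
        exact eventually_mem_nhdsWithin
      have hn : ∀ᶠ p : ℂ × ℂ in l ×ˢ l, p.1 - starRingEnd ℂ p.2 ≠ 0 :=
        (f1.sub (cj f2)).eventually_ne (sub_ne_zero.2 (hvc v hv))
      filter_upwards [hl1.prod_mk hl1, hn] with p hp hp2
      rw [dist_eq_norm]
      exact (h p.1 p.2 v hp.1.2 hp.2.2 hv hp.1.1 hp.2.1 (sub_ne_zero.1 hp2)).2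
    have := (squeeze_zero' (Eventually.of_forall fun p => by positivity) ev hE).sqrt
    simpa using this
  obtain ⟨d, hd⟩ := CompleteSpace.complete hc
  have hder : HasDerivAt m d v := by
    rw [hasDerivAt_iff_tendsto_slope]
    refine Tendsto.congr (fun z => ?_) hd
    rw [slope_def_field]
  exact hder.differentiableAt.differentiableWithinAt


/-- Weyl–Titchmarsh `m`-function: if `𝕋` is bounded from below and `ℓ` is in the limit-point
case at `b`, then for every `z ∈ ℂ \ ℝ` there is a unique `m(z) ∈ ℂ` such that the Weyl
solution `ψ_z = θ_z + m(z) φ_z` lies in `L²` near `b`, and `m` is a Herglotz–Nevanlinna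
function: analytic on `ℂ \ ℝ`, with `m(z̄) = m(z)̄` and `Im m(z) > 0` for `Im z > 0`. -/
theorem weyl_titchmarsh_m_function_herglotz
    (T : Set ℝ) (hne : T.Nonempty) (hcl : IsClosed T) (hbb : BddBelow T)
    (hfive : ∃ s : Finset ℝ, ↑s ⊆ T ∧ 5 ≤ s.card)
    (μ ν : Measure ℝ)
    (hμ : ∀ c d : ℝ, c ≤ d →
      μ (Set.Ioc c d) = ENNReal.ofReal (tsSigma (tsKappa T) d - tsSigma (tsKappa T) c))
    (hν : ∀ c d : ℝ, c ≤ d → ν (Set.Ico c d) = ENNReal.ofReal (tsRho T d - tsRho T c))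
    (p r q : ℝ → ℝ)
    (hr : LocallyIntegrable r μ) (hrpos : ∀ᵐ t ∂μ, 0 < r t)
    (hq : LocallyIntegrable q μ)
    (hpne : ∀ᵐ t ∂ν, p t ≠ 0) (hp : LocallyIntegrable (fun t => 1 / p t) ν)
    (hlpb : LimitPointRight T μ p r q)
    (φα : ℝ) (hφα : 0 ≤ φα ∧ φα < Real.pi)
    (θ θ1 φ φ1 : ℂ → ℝ → ℂ)
    (hθ : ∀ z : ℂ, IsSLSol T μ (cR p) (cR r) (cR q) z 0 (θ z) (θ1 z) ∧
      θ z (tsSigma T (sInf T)) = (Real.cos φα : ℂ) ∧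
      θ1 z (tsSigma T (sInf T)) = -(Real.sin φα : ℂ))
    (hφ : ∀ z : ℂ, IsSLSol T μ (cR p) (cR r) (cR q) z 0 (φ z) (φ1 z) ∧
      φ z (tsSigma T (sInf T)) = (Real.sin φα : ℂ) ∧
      φ1 z (tsSigma T (sInf T)) = (Real.cos φα : ℂ)) :
    ∃ m : ℂ → ℂ,
      (∀ z : ℂ, z.im ≠ 0 →
        (L2NearRight T μ r (fun x => θ z x + m z * φ z x) ∧
          ∀ m' : ℂ, L2NearRight T μ r (fun x => θ z x + m' * φ z x) → m' = m z)) ∧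
      AnalyticOnNhd ℂ m {z : ℂ | z.im ≠ 0} ∧
      (∀ z : ℂ, z.im ≠ 0 → m (starRingEnd ℂ z) = starRingEnd ℂ (m z)) ∧
      (∀ z : ℂ, 0 < z.im → 0 < (m z).im) := by
  have hloc : IsLocallyFiniteMeasure μ := by
    refine ⟨fun x => ⟨Ioc (x - 1) (x + 1), Ioc_mem_nhds (by linarith) (by linarith), ?_⟩⟩
    rw [hμ _ _ (by linarith)]
    exact ENNReal.ofReal_lt_top
  have hub : ¬ BddAbove T := by
    intro hba
    obtain ⟨u, u1, hu, hL⟩ := hlpb 0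
    apply hL
    have hc : Continuous u := cont_of_pair (fun c x hcx => (hu c x hcx).1)
    intro c _
    refine lt_of_le_of_lt (lintegral_mono_set ?_) (sq_fin hr hc c (sSup T))
    rintro t ⟨⟨h1, s, hs, hts⟩, _⟩
    exact ⟨h1, hts.le.trans (le_csSup hba hs)⟩
  obtain ⟨k1, k2, k3, k4⟩ := kappa_closed hne hcl hbb hub
  obtain ⟨hp1, hp2⟩ := pbar_props hne hcl hbb hub ν hν p hpne hp
  have hx0 : sInf T ≤ tsSigma T (sInf T) := (sig_props hcl hub (sInf T)).2.1
  set x0 := tsSigma T (sInf T) with hx0d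
  set w : ℝ → ℝ := fun t => 1 / p (gk (tsKappa T) t) with hwd
  have hw : ∀ x, IntegrableOn w (Ioc x0 x) volume := fun x =>
    (hp2 x).mono_set (Ioc_subset_Ioc_left hx0)
  have hwne : ∀ᵐ t ∂(volume.restrict (Ioi x0)), w t ≠ 0 := by
    have : ∀ᵐ t ∂(volume.restrict (Ioi x0)), p (gk (tsKappa T) t) ≠ 0 :=
      ae_restrict_of_ae_restrict_of_subset (Ioi_subset_Ioi hx0) hp1
    filter_upwards [this] with t ht
    exact one_div_ne_zero ht
  have hext : ∀ t, extK T (cR p) t = (p (gk (tsKappa T) t) : ℂ) := by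
    intro t
    unfold extK cR gk
    split_ifs <;> rfl
  have hsol : ∀ {z : ℂ} {u u1 : ℝ → ℂ}, IsSLSol T μ (cR p) (cR r) (cR q) z 0 u u1 →
      Sol x0 μ w r q z u u1 := by
    intro z u u1 hu
    refine sol_mk hr hq hw fun c x hcx => ?_
    obtain ⟨h1, h2⟩ := hu c x hcx
    constructor
    · rw [h1]
      congr 2
      ext t
      rw [hext, hwd]
      push_cast
      rw [div_eq_mul_one_div]
    · rw [h2]
      congr 2
      ext t
      simp [cR]
  have hθS : ∀ z, Sol x0 μ w r q z (θ z) (θ1 z) := fun z => hsol (hθ z).1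
  have hφS : ∀ z, Sol x0 μ w r q z (φ z) (φ1 z) := fun z => hsol (hφ z).1
  have hi : ∀ z, Ini x0 (Real.cos φα) (Real.sin φα) (θ z) (θ1 z) (φ z) (φ1 z) := fun z =>
    ⟨(hθ z).2.1, (hθ z).2.2, (hφ z).2.1, (hφ z).2.2⟩
  have hcs : ((Real.cos φα : ℝ) : ℂ) ^ 2 + ((Real.sin φα : ℝ) : ℂ) ^ 2 = 1 := by
    have := Real.cos_sq_add_sin_sq φα
    exact_mod_cast this
  have hnt : ∀ {z : ℂ} {u u1 : ℝ → ℂ}, Sol x0 μ w r q z u u1 → ¬ (u x0 = 0 ∧ u1 x0 = 0) →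
      ∃ x, x0 ≤ x ∧ 0 < An x0 μ r x u := by
    intro z u u1 hu hn
    by_contra hc
    push Not at hc
    exact hn (nontriv k1 k2 hμ (P := fun t => 1 / p t) hr hrpos (fun t => rfl) hwne hu
      (fun x hx => le_antisymm (hc x hx) (An_nonneg hrpos _ _)))
  have hLP : ∀ z, ¬ (L2NearRight T μ r (θ z) ∧ L2NearRight T μ r (φ z)) := by
    rintro z ⟨h1, h2⟩
    obtain ⟨u, u1, hu, hL⟩ := hlpb z
    exact hL (l2_comb k4 k1.measurableSet hr (hθS z).cont _ _
      (fun t ht => sol_comb hr hcs (hθS z) (hφS z) (hi z) (hsol hu) ht) h1 h2)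
  have hphint : ∀ z, ∃ x, x0 ≤ x ∧ 0 < An x0 μ r x (φ z) := by
    intro z
    refine hnt (hφS z) ?_
    rintro ⟨h1, h2⟩
    rw [(hi z).d] at h1
    rw [(hi z).e] at h2
    rw [h1, h2] at hcs
    norm_num at hcs
  have hW : ∀ z : ℂ, ∃ m : ℂ, z.im ≠ 0 →
      (∀ n : ℕ, An x0 μ r n (fun t => θ z t + m * φ z t) ≤ m.im / z.im) ∧
      Tendsto (fun n : ℕ => -θ z n / φ z n) atTop (nhds m) ∧ ∀ᶠ n : ℕ in atTop, φ z n ≠ 0 := by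
    intro z
    by_cases hz : z.im ≠ 0
    · obtain ⟨m, hm⟩ := weyl_exists k4 k1.measurableSet hr hrpos hcs (hθS z) (hφS z) (hi z) hz
        (hphint z) (hLP z)
      exact ⟨m, fun _ => hm⟩
    · exact ⟨0, fun h => absurd h hz⟩
  choose m hm using hW
  have hL : ∀ z : ℂ, z.im ≠ 0 → L2NearRight T μ r (fun x => θ z x + m z * φ z x) := fun z hz =>
    l2_of_bdd k4 hr hrpos ((hθS z).comb (hφS z) (m z)).cont _ (hm z hz).1
  obtain ⟨N0, hN0⟩ := exists_nat_ge x0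
  have hgeN : ∀ᶠ n : ℕ in atTop, x0 ≤ n := by
    filter_upwards [eventually_ge_atTop N0] with n hn
    exact hN0.trans (by exact_mod_cast hn)
  refine ⟨m, fun z hz => ⟨hL z hz, fun m' hm' => ?_⟩, ?_, ?_, ?_⟩
  · by_contra hne'
    have hd : m' - m z ≠ 0 := sub_ne_zero.2 hne'
    have hφL : L2NearRight T μ r (φ z) :=
      l2_comb k4 k1.measurableSet hr ((hθS z).comb (hφS z) m').cont (1 / (m' - m z))
        (-(1 / (m' - m z))) (fun t _ => by field_simp; ring) hm' (hL z hz)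
    refine hLP z ⟨?_, hφL⟩
    exact l2_comb k4 k1.measurableSet hr ((hθS z).comb (hφS z) m').cont 1 (-m')
      (fun t _ => by ring) hm' hφL
  · refine analytic_of_kern m ?_
    intro z z' v hz hz' hv hzv hz'v hzz
    obtain ⟨-, t1, p1⟩ := hm z hz
    obtain ⟨-, t2, p2⟩ := hm z' hz'
    obtain ⟨-, t3, p3⟩ := hm v hv
    have key := (hgeN.and (p1.and (p2.and p3))).mono fun n hn =>
      kern_fin hr hrpos hcs hθS hφS hi hn.1 (fun a => -θ a n / φ a n) hz hz' hv hzv hz'v hzz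
        (by rw [div_mul_cancel₀ _ hn.2.1]; ring)
        (by rw [div_mul_cancel₀ _ hn.2.2.1]; ring)
        (by rw [div_mul_cancel₀ _ hn.2.2.2]; ring)
    have im {f : ℕ → ℂ} {a : ℂ} (hf : Tendsto f atTop (nhds a)) :
      Tendsto (fun n => (f n).im) atTop (nhds a.im) := (Complex.continuous_im.tendsto a).comp hf
    have re {f : ℕ → ℂ} {a : ℂ} (hf : Tendsto f atTop (nhds a)) :
      Tendsto (fun n => (f n).re) atTop (nhds a.re) := (Complex.continuous_re.tendsto a).comp hf
    have cj {f : ℕ → ℂ} {a : ℂ} (hf : Tendsto f atTop (nhds a)) :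
      Tendsto (fun n => starRingEnd ℂ (f n)) atTop (nhds (starRingEnd ℂ a)) :=
      (Complex.continuous_conj.tendsto a).comp hf
    constructor
    · exact le_of_tendsto_of_tendsto (((t1.sub t3).div_const (z - v)).norm.pow 2)
        (((im t1).div_const z.im).mul ((im t3).div_const v.im)) (key.mono fun n hn => hn.1)
    · exact le_of_tendsto_of_tendsto
        ((((t1.sub t3).div_const (z - v)).sub ((t2.sub t3).div_const (z' - v))).norm.pow 2)
        (((((im t1).div_const z.im).sub
          ((re ((t1.sub (cj t2)).div_const (z - starRingEnd ℂ z'))).const_mul 2)).add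
          ((im t2).div_const z'.im)).mul ((im t3).div_const v.im)) (key.mono fun n hn => hn.2)
  · intro z hz
    have hz' : (starRingEnd ℂ z).im ≠ 0 := by simpa using hz
    refine tendsto_nhds_unique (hm _ hz').2.1 ?_
    have h1 := (Complex.continuous_conj.tendsto (m z)).comp (hm z hz).2.1
    refine h1.congr' ?_
    filter_upwards [hgeN] with n hn
    obtain ⟨e1, e2⟩ := conj_eq hr hcs (hθS z) (hφS z) (hi z) (hθS (starRingEnd ℂ z))
      (hφS (starRingEnd ℂ z)) (hi (starRingEnd ℂ z)) hn
    simp only [Function.comp_apply, map_div₀, map_neg, e1, e2]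
  · intro z hz
    obtain ⟨x, hx, hpos⟩ := hnt ((hθS z).comb (hφS z) (m z)) (by
      rintro ⟨h1, h2⟩
      simp only [(hi z).a, (hi z).b, (hi z).d, (hi z).e] at h1 h2
      have : ((Real.cos φα : ℝ) : ℂ) ^ 2 + ((Real.sin φα : ℝ) : ℂ) ^ 2 = 0 := by
        linear_combination (Real.cos φα : ℂ) * h1 - (Real.sin φα : ℂ) * h2
      rw [hcs] at this
      exact one_ne_zero this)
    obtain ⟨n, hn⟩ := exists_nat_ge x
    have h1 := hpos.trans_le (An_mono hr hrpos ((hθS z).comb (hφS z) (m z)).cont hn)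
    have h2 := h1.trans_le ((hm z hz.ne').1 n)
    exact (div_pos_iff_of_pos_right hz).1 h2
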